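/- If V_* is a Steiner triple system, then there is an integer N such that for every integer u with u ≥ N and u ≡ 1 or 3 (mod 6), there exists a Steiner triple system U on u points containing a subsystem V isomorphic to V_* such that V is invariant under Aut U and the restriction map from Aut U to Aut V is a group isomorphism (i.e. Aut U induces the full group Aut V on V and Aut U ≅ Aut V). -/

import Mathlib

open Finset

noncomputable section
open scoped Classical

/-- `T` is the set of triples of a Steiner triple system on the finite type `α`:
every pair of distinct points lies in exactly one triple. -/
def IsSTS {α : Type*} (T : Finset (Finset α)) : Prop :=
  (∀ t ∈ T, t.card = 3) ∧
    ∀ p q : α, p ≠ q → ∃! t : Finset α, t ∈ T ∧ p ∈ t ∧ q ∈ t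

/-- `T` is the set of triples of a partial Steiner triple system on `α`:
every pair of distinct points lies in at most one triple. -/
def IsPSTS {α : Type*} (T : Finset (Finset α)) : Prop :=
  (∀ t ∈ T, t.card = 3) ∧
    ∀ p q : α, p ≠ q → ∀ t₁ ∈ T, ∀ t₂ ∈ T, p ∈ t₁ → q ∈ t₁ → p ∈ t₂ → q ∈ t₂ → t₁ = t₂

/-- `W` is a (closed) subsystem of the triple system `T`. -/
def IsSub {α : Type*} (T : Finset (Finset α)) (W : Finset α) : Prop :=
  ∀ t ∈ T, 2 ≤ (t ∩ W).card → t ⊆ W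

/-- `g` is an automorphism of the triple system `T`. -/
def IsAut {α : Type*} (T : Finset (Finset α)) (g : Equiv.Perm α) : Prop :=
  ∀ t : Finset α, t ∈ T ↔ t.image g ∈ T

/-- The automorphism group of a triple system, as a subgroup of the permutation group. -/
def autGroup {α : Type*} (T : Finset (Finset α)) : Subgroup (Equiv.Perm α) where
  carrier := {g : Equiv.Perm α | IsAut T g}
  one_mem' := by
    intro t
    simp
  mul_mem' := by
    intro a b ha hb t
    have h1 := hb t
    have h2 := ha (t.image b)
    have key : t.image ⇑(a * b) = (t.image ⇑b).image ⇑a := by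
      rw [Equiv.Perm.coe_mul, Finset.image_image]
    rw [key, ← h2]
    exact h1
  inv_mem' := by
    intro a ha t
    have h := ha (t.image ⇑a⁻¹)
    have key : (t.image ⇑a⁻¹).image ⇑a = t := by
      rw [Finset.image_image]
      have hc : (⇑a ∘ ⇑a⁻¹) = id := by
        funext x
        simp
      rw [hc, Finset.image_id]
    rw [key] at h
    exact h.symm

/-- `φ` embeds the triple system `S` onto a subsystem of `T`: it is injective, maps
triples of `S` to triples of `T`, and the triples of `T` inside the image of `φ` are
precisely the images of the triples of `S`. -/
def IsCopy {α β : Type*} [Fintype α] (S : Finset (Finset α)) (T : Finset (Finset β))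
    (φ : α → β) : Prop :=
  Function.Injective φ ∧ (∀ s ∈ S, s.image φ ∈ T) ∧
    ∀ t ∈ T, t ⊆ Finset.univ.image φ → ∃ s ∈ S, t = s.image φ

/-- The point set `W` is invariant under every automorphism of `T`. -/
def AutInvariant {β : Type*} (T : Finset (Finset β)) (W : Finset β) : Prop :=
  ∀ g : Equiv.Perm β, IsAut T g → W.image g = W

/-- For the copy of `S` inside `T` given by `φ`, restriction gives a group isomorphism
from `Aut T` onto `Aut S`: every automorphism of `T` induces (via `φ`) an automorphism
of `S`, and every automorphism of `S` is induced by exactly one automorphism of `T`. -/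
def AutRestrictIso {α β : Type*} (T : Finset (Finset β)) (S : Finset (Finset α))
    (φ : α → β) : Prop :=
  (∀ g : Equiv.Perm β, IsAut T g →
      ∃ h : Equiv.Perm α, IsAut S h ∧ ∀ x : α, g (φ x) = φ (h x)) ∧
    ∀ h : Equiv.Perm α, IsAut S h →
      ∃! g : Equiv.Perm β, IsAut T g ∧ ∀ x : α, g (φ x) = φ (h x)

/-- `φ` embeds `S` as an `Aut T`-invariant subsystem of `T` on which `Aut T` induces
the full automorphism group of `S`, with `Aut T ≅ Aut S` via restriction. -/
def FullEmbedding {α β : Type*} [Fintype α] (S : Finset (Finset α)) (T : Finset (Finset β))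
    (φ : α → β) : Prop :=
  IsCopy S T φ ∧ AutInvariant T (Finset.univ.image φ) ∧ AutRestrictIso T S φ

/-- The points of the projective space `PG(n,2)`: nonzero vectors of `GF(2)^{n+1}`. -/
abbrev PGPoint (n : ℕ) := {x : Fin (n + 1) → ZMod 2 // x ≠ 0}

/-- The lines of `PG(n,2)`: 3-sets of nonzero vectors summing to `0`. -/
def PGTriples (n : ℕ) : Finset (Finset (PGPoint n)) :=
  Finset.univ.filter fun t : Finset (PGPoint n) =>
    t.card = 3 ∧ ∑ v ∈ t, (v : Fin (n + 1) → ZMod 2) = 0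

/-- The smallest subsystem of `T` containing the point set `P`. -/
def GeneratedSub {α : Type*} [Fintype α] (T : Finset (Finset α)) (P : Finset α) : Finset α :=
  Finset.univ.filter fun x => ∀ W : Finset α, IsSub T W → P ⊆ W → x ∈ W

/-- `W` is a subsystem of `T` isomorphic to `PG(n,2)`. -/
def IsPGSub {α : Type*} [Fintype α] (n : ℕ) (T : Finset (Finset α)) (W : Finset α) : Prop :=
  ∃ φ : PGPoint n → α, IsCopy (PGTriples n) T φ ∧ Finset.univ.image φ = W

/-- A triple system is `PG(2,2)`-paired if any two distinct points lie in at least two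
subsystems isomorphic to `PG(2,2)`. -/
def PG22Paired {α : Type*} [Fintype α] (T : Finset (Finset α)) : Prop :=
  ∀ p q : α, p ≠ q → ∃ W₁ W₂ : Finset α, W₁ ≠ W₂ ∧
    (p ∈ W₁ ∧ q ∈ W₁ ∧ IsPGSub 2 T W₁) ∧ p ∈ W₂ ∧ q ∈ W₂ ∧ IsPGSub 2 T W₂

/-- `T` is `PG(3,2)`-2-pointed with respect to the points `p, q`: any four points
including `p` and `q` generate a subsystem isomorphic to `PG(2,2)` or `PG(3,2)`. -/
def PG32TwoPointed {α : Type*} [Fintype α] (T : Finset (Finset α)) (p q : α) : Prop :=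
  p ≠ q ∧ ∀ s : Finset α, s.card = 4 → p ∈ s → q ∈ s →
    IsPGSub 2 T (GeneratedSub T s) ∨ IsPGSub 3 T (GeneratedSub T s)

/-- The copy of `Y` inside `2Y+1`. -/
def dp0 {γ : Type*} (a : γ) : γ ⊕ γ ⊕ Unit := Sum.inl a

/-- The disjoint copy `Y₁` of `Y` inside `2Y+1`. -/
def dp1 {γ : Type*} (a : γ) : γ ⊕ γ ⊕ Unit := Sum.inr (Sum.inl a)

/-- The extra point `*` of `2Y+1`. -/
def dpStar {γ : Type*} : γ ⊕ γ ⊕ Unit := Sum.inr (Sum.inr ())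

/-- The triples of the Steiner triple system `2Y+1` built from a system `Y` with
triple set `T`. -/
def DoubleTriples {γ : Type*} [Fintype γ] (T : Finset (Finset γ)) :
    Finset (Finset (γ ⊕ γ ⊕ Unit)) :=
  Finset.univ.filter fun t : Finset (γ ⊕ γ ⊕ Unit) =>
    (∃ s ∈ T, t = s.image dp0) ∨
    (∃ a : γ, t = {dpStar, dp0 a, dp1 a}) ∨
    (∃ a b c : γ, ({a, b, c} : Finset γ) ∈ T ∧ t = {dp1 a, dp1 b, dp0 c})

/-- The triples of the direct product of two triple systems. -/
def ProdTriples {α β : Type*} [Fintype α] [Fintype β]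
    (TA : Finset (Finset α)) (TB : Finset (Finset β)) : Finset (Finset (α × β)) :=
  Finset.univ.filter fun t : Finset (α × β) =>
    (∃ a : α, ∃ s ∈ TB, t = s.image fun b => (a, b)) ∨
    (∃ b : β, ∃ s ∈ TA, t = s.image fun a => (a, b)) ∨
    (∃ a₁ a₂ a₃ : α, ∃ b₁ b₂ b₃ : β, ({a₁, a₂, a₃} : Finset α) ∈ TA ∧
      ({b₁, b₂, b₃} : Finset β) ∈ TB ∧ t = {(a₁, b₁), (a₂, b₂), (a₃, b₃)})

/-- The triples of Moore's construction `U = X ∪ (V × A)`.  Here `TX` (on `δ`), `TV`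
(on `α`), `TY` (on `γ`) are the triple sets of `X`, `V`, `Y`; `j : δ → γ` embeds `X`
as a subsystem of `Y` and `ℓ : A → γ` labels `Y − X` by the group `A`. -/
def MooreTriples {δ α γ A : Type*} [Fintype δ] [Fintype α] [Fintype A] [Group A]
    (TX : Finset (Finset δ)) (TV : Finset (Finset α)) (TY : Finset (Finset γ))
    (j : δ → γ) (ℓ : A → γ) : Finset (Finset (δ ⊕ α × A)) :=
  Finset.univ.filter fun t : Finset (δ ⊕ α × A) =>
    (∃ s ∈ TX, t = s.image Sum.inl) ∨
    (∃ v : α, ∃ a₁ a₂ : A, ∃ x : δ, ({ℓ a₁, ℓ a₂, j x} : Finset γ) ∈ TY ∧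
      t = {Sum.inr (v, a₁), Sum.inr (v, a₂), Sum.inl x}) ∨
    (∃ v : α, ∃ a₁ a₂ a₃ : A, ({ℓ a₁, ℓ a₂, ℓ a₃} : Finset γ) ∈ TY ∧
      t = {Sum.inr (v, a₁), Sum.inr (v, a₂), Sum.inr (v, a₃)}) ∨
    (∃ v₁ v₂ v₃ : α, ∃ a₁ a₂ a₃ : A, ({v₁, v₂, v₃} : Finset α) ∈ TV ∧ a₁ * a₂ * a₃ = 1 ∧
      t = {Sum.inr (v₁, a₁), Sum.inr (v₂, a₂), Sum.inr (v₃, a₃)})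

/-- The hypotheses of Moore's construction: `Y` and `V` are Steiner triple systems,
`A` is a cyclic group, `j` embeds `X` as a subsystem of `Y` (with triple set `TX`),
and `ℓ` is a bijective labeling of `Y − X` by `A`. -/
def MooreSetup {δ α γ A : Type*} [Fintype δ] [Group A]
    (TX : Finset (Finset δ)) (TV : Finset (Finset α)) (TY : Finset (Finset γ))
    (j : δ → γ) (ℓ : A → γ) : Prop :=
  IsSTS TY ∧ IsSTS TV ∧ IsCyclic A ∧ Function.Injective j ∧
    IsSub TY (Finset.univ.image j) ∧ IsCopy TX TY j ∧
    Function.Injective ℓ ∧ Set.range ℓ = (Set.range j)ᶜ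

/-- The subsystem `Y_v = X ∪ (v × A)` of Moore's construction. -/
def MooreY {δ α A : Type*} [Fintype δ] [Fintype A] (v : α) : Finset (δ ⊕ α × A) :=
  (Finset.univ.image (Sum.inl : δ → δ ⊕ α × A)) ∪
    Finset.univ.image fun a : A => (Sum.inr (v, a) : δ ⊕ α × A)

/-- A subsystem of type (3.1) of Moore's construction, where `ε` denotes the unique
involution `−1` of `A`: the seven points `x, (v_i, a_i), (v_i, −a_i)` for a triple
`{v₁,v₂,v₃}` of `V`, with `a₁a₂a₃ = 1` and `{a_i, −a_i, x}` a triple of `Y`. -/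
def MooreType31 {δ α γ A : Type*} [Group A] (TV : Finset (Finset α))
    (TY : Finset (Finset γ)) (j : δ → γ) (ℓ : A → γ) (ε : A)
    (W : Finset (δ ⊕ α × A)) : Prop :=
  ∃ v₁ v₂ v₃ : α, ∃ a₁ a₂ a₃ : A, ∃ x : δ,
    ({v₁, v₂, v₃} : Finset α) ∈ TV ∧ a₁ * a₂ * a₃ = 1 ∧
    ({ℓ a₁, ℓ (ε * a₁), j x} : Finset γ) ∈ TY ∧
    ({ℓ a₂, ℓ (ε * a₂), j x} : Finset γ) ∈ TY ∧
    ({ℓ a₃, ℓ (ε * a₃), j x} : Finset γ) ∈ TY ∧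
    W = {Sum.inl x, Sum.inr (v₁, a₁), Sum.inr (v₁, ε * a₁), Sum.inr (v₂, a₂),
         Sum.inr (v₂, ε * a₂), Sum.inr (v₃, a₃), Sum.inr (v₃, ε * a₃)}

/-- The point set of a family of triples. -/
def ptsOf {β : Type*} (T : Finset (Finset β)) : Finset β := T.sup id

/-- Adjacency of triples: two distinct triples of `T` meeting in a point. -/
def TriAdj {β : Type*} (T : Finset (Finset β)) (t s : Finset β) : Prop :=
  t ∈ T ∧ s ∈ T ∧ t ≠ s ∧ (t ∩ s).Nonempty

/-- A partial Steiner triple system is cyclic if the graph whose vertices are its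
triples, two joined when they meet, is a cycle (equivalently: it has at least three
triples, every triple meets exactly two others, and the graph is connected). -/
def IsCyclicPSTS {β : Type*} (T : Finset (Finset β)) : Prop :=
  3 ≤ T.card ∧ (∀ t ∈ T, (T.filter fun s => s ≠ t ∧ (s ∩ t).Nonempty).card = 2) ∧
    ∀ t ∈ T, ∀ s ∈ T, Relation.ReflTransGen (TriAdj T) t s

/-- The partial Steiner triple system `Q(z)` (for the parameter `n`), with triple set
`T`, point set `P` and distinguished point `z`: two cyclic PSTSs `C₁, C₂` on
`2n+4` and `2n+6` points meeting exactly in the point `z`, which lies in two triples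
of each, triples `{z, z'_i, z_i}` of `C_i` with `z'_i` in two triples of `C_i`, and a
new point `z'` in the single additional triple `{z'_1, z', z'_2}`. -/
def IsQ {β : Type*} (n : ℕ) (T : Finset (Finset β)) (P : Finset β) (z : β) : Prop :=
  ∃ C₁ C₂ : Finset (Finset β), ∃ z' z₁' z₂' z₁ z₂ : β,
    IsPSTS T ∧ IsCyclicPSTS C₁ ∧ IsCyclicPSTS C₂ ∧
    (ptsOf C₁).card = 2 * n + 4 ∧ (ptsOf C₂).card = 2 * n + 6 ∧
    ptsOf C₁ ∩ ptsOf C₂ = {z} ∧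
    (C₁.filter fun t => z ∈ t).card = 2 ∧ (C₂.filter fun t => z ∈ t).card = 2 ∧
    ({z, z₁', z₁} : Finset β) ∈ C₁ ∧ (C₁.filter fun t => z₁' ∈ t).card = 2 ∧
    ({z, z₂', z₂} : Finset β) ∈ C₂ ∧ (C₂.filter fun t => z₂' ∈ t).card = 2 ∧
    z' ∉ ptsOf C₁ ∪ ptsOf C₂ ∧
    T = C₁ ∪ C₂ ∪ {({z₁', z', z₂'} : Finset β)} ∧
    P = ptsOf C₁ ∪ ptsOf C₂ ∪ {z'}

/-- Nonempty subsets of `β`: the points of the projective space `P` over `GF(2)`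
built on a point set `β`. -/
abbrev NESet (β : Type*) := {s : Finset β // s.Nonempty}

/-- The triples of the projective space over `GF(2)` on the nonempty subsets of `β`:
3-sets of subsets with empty symmetric difference. -/
def sdTriples (β : Type*) [Fintype β] : Finset (Finset (NESet β)) :=
  Finset.univ.filter fun t : Finset (NESet β) =>
    ∃ a b c : NESet β, a ≠ b ∧ a ≠ c ∧ b ≠ c ∧ t = {a, b, c} ∧
      symmDiff (symmDiff a.1 b.1) c.1 = ∅

/-- The singleton `{a}` as a point of the projective space. -/
def sEl {β : Type*} (a : β) : NESet β := ⟨{a}, Finset.singleton_nonempty a⟩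

/-- The pair `{a,b}` as a point of the projective space. -/
def pEl {β : Type*} (a b : β) : NESet β := ⟨{a, b}, Finset.insert_nonempty a {b}⟩

/-- The triples of `P` removed in Cameron's construction, for each triple `{a,b,c}`
of `V'`. -/
def removedTriples {β : Type*} [Fintype β] (TV' : Finset (Finset β)) :
    Finset (Finset (NESet β)) :=
  Finset.univ.filter fun t : Finset (NESet β) =>
    ∃ a b c : β, ({a, b, c} : Finset β) ∈ TV' ∧
      (t = {pEl a b, pEl a c, pEl b c} ∨ t = {sEl a, sEl b, pEl a b} ∨
       t = {sEl a, sEl c, pEl a c} ∨ t = {sEl b, sEl c, pEl b c})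

/-- The new triples of Cameron's construction, for each triple `{a,b,c}` of `V'`. -/
def addedTriples {β : Type*} [Fintype β] (TV' : Finset (Finset β)) :
    Finset (Finset (NESet β)) :=
  Finset.univ.filter fun t : Finset (NESet β) =>
    ∃ a b c : β, ({a, b, c} : Finset β) ∈ TV' ∧
      (t = {sEl a, sEl b, sEl c} ∨ t = {sEl a, pEl a b, pEl a c} ∨
       t = {sEl b, pEl a b, pEl b c} ∨ t = {sEl c, pEl a c, pEl b c})

/-- The Steiner triple system `U` of Cameron's construction obtained from the
projective space `P` and the partial system `V'`. -/
def CameronSTS {β : Type*} [Fintype β] (TV' : Finset (Finset β)) :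
    Finset (Finset (NESet β)) :=
  (sdTriples β \ removedTriples TV') ∪ addedTriples TV'

/-!
View a Steiner triple system `V` as a Steiner quasigroup. Moore's construction on `X ⊔ (V × A)`
takes the triples of `V × A` lying over triples of `V` whose `A`-coordinates have sum zero, and
fills every `X ⊔ ({v} × A)` with the same system having a hole `X`. Automorphisms of `V` lift by
acting trivially on `X` and `A`. Conversely, if `A` is large and the matchings of `A` given by the
points of `X` are suitable, the nonempty fibres of a subsystem of size `|X| + |A|` meeting several
fibres would be cosets of one subgroup, and counting rules this out. An automorphism thus permutes
the fillings, and the zero-sum condition forces it to act on `A` by an affine injection compatible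
with the filling.

To exclude nontrivial such maps, label `A` by `ZMod n` so that one point of `X` gives a fixed
matching of `ZMod n` with no affine symmetry, which reverses parity, while every other point of
`X` has an edge between residues of the same parity.

Every large admissible `u` equals `|X| + |V| * 12 * (2 * k + 1)` with `|X|` admissible and small
compared with `k`. The required systems with a hole come from a group divisible design over
`ZMod (2 * k + 1)` with groups of size `12`; its hole grows by six points whenever a certain set of
triples, which decomposes into six perfect matchings, is replaced by those matchings.

If `V` has at most one point, it is embedded in a rigid system instead.
-/

/-! ### Steiner quasigroups -/

/-- A Steiner quasigroup: the algebraic form of a Steiner triple system, in which the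
product of two distinct points is the third point of their triple. -/
structure SteinerQuasigroup (α : Type*) where
  op : α → α → α
  idem : ∀ a, op a a = a
  comm : ∀ a b, op a b = op b a
  cancel : ∀ a b, op a (op a b) = b

namespace SteinerQuasigroup

variable {α β γ : Type*}

/-- The homomorphisms of Steiner quasigroups. -/
def IsHom (S : SteinerQuasigroup α) (U : SteinerQuasigroup β) (φ : α → β) : Prop :=
  ∀ a b, φ (S.op a b) = U.op (φ a) (φ b)

/-- The permutations preserving the product of a Steiner quasigroup, that is, the automorphisms
of its Steiner triple system. -/
abbrev IsAutomorphism (S : SteinerQuasigroup α) (g : Equiv.Perm α) : Prop :=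
  S.IsHom S g

/-- The triples of the Steiner triple system of a Steiner quasigroup. -/
def triples [Fintype α] (S : SteinerQuasigroup α) : Finset (Finset α) :=
  univ.filter fun t => ∃ a b, a ≠ b ∧ t = {a, b, S.op a b}

/-- Transport of a Steiner quasigroup along a bijection. -/
def map (S : SteinerQuasigroup α) (e : α ≃ β) : SteinerQuasigroup β where
  op a b := e (S.op (e.symm a) (e.symm b))
  idem a := by simp [S.idem]
  comm a b := by rw [S.comm]
  cancel a b := by simp [S.cancel]

theorem op_ne_left (S : SteinerQuasigroup α) {a b : α} (h : a ≠ b) : S.op a b ≠ a := by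
  intro hab
  have hcancel := S.cancel a b
  rw [hab, S.idem] at hcancel
  exact h hcancel

theorem op_ne_right (S : SteinerQuasigroup α) {a b : α} (h : a ≠ b) : S.op a b ≠ b := by
  rw [S.comm]
  exact S.op_ne_left h.symm

theorem op_op_right (S : SteinerQuasigroup α) (a b : α) : S.op (S.op a b) b = a := by
  rw [S.comm a b, S.comm, S.cancel]

theorem exists_of_rel {R : α → α → α → Prop} (refl : ∀ a, R a a a)
    (swap_left : ∀ {a b c}, R a b c → R b a c) (swap_right : ∀ {a b c}, R a b c → R a c b)
    (existsUnique : ∀ a b, ∃! c, R a b c) :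
    ∃ S : SteinerQuasigroup α, ∀ a b c, S.op a b = c ↔ R a b c := by
  choose f hf funiq using existsUnique
  have hR (a b c : α) : f a b = c ↔ R a b c :=
    ⟨fun h => h ▸ hf a b, fun h => (funiq a b c h).symm⟩
  exact ⟨{ op := f
           idem := fun a => (hR a a a).2 (refl a)
           comm := fun a b => (hR a b _).2 (swap_left (hf b a))
           cancel := fun a b => (hR a _ b).2 (swap_right (hf a b)) }, hR⟩

theorem mem_triples [Fintype α] (S : SteinerQuasigroup α) {t : Finset α} :
    t ∈ S.triples ↔ ∃ a b, a ≠ b ∧ t = {a, b, S.op a b} := by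
  simp [triples]

theorem eq_of_mem_triples [Fintype α] (S : SteinerQuasigroup α) {t : Finset α}
    (ht : t ∈ S.triples) {p q : α} (hp : p ∈ t) (hq : q ∈ t) (hpq : p ≠ q) :
    t = {p, q, S.op p q} := by
  obtain ⟨a, b, -, rfl⟩ := S.mem_triples.1 ht
  have hcancel := S.cancel a b
  have hright := S.op_op_right a b
  have hcomm := S.comm
  simp only [mem_insert, mem_singleton] at hp hq
  ext z
  simp only [mem_insert, mem_singleton]
  rcases hp with rfl | rfl | rfl <;> rcases hq with rfl | rfl | rfl <;> grind

theorem isSTS_triples [Fintype α] (S : SteinerQuasigroup α) : IsSTS S.triples := by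
  refine ⟨fun t ht => ?_, fun p q hpq => ⟨{p, q, S.op p q}, ?_, ?_⟩⟩
  · obtain ⟨a, b, hab, rfl⟩ := S.mem_triples.1 ht
    exact card_eq_three.2 ⟨a, b, S.op a b, hab, (S.op_ne_left hab).symm,
      (S.op_ne_right hab).symm, rfl⟩
  · exact ⟨S.mem_triples.2 ⟨p, q, hpq, rfl⟩, by simp, by simp⟩
  · rintro t ⟨ht, hp, hq⟩
    exact S.eq_of_mem_triples ht hp hq hpq

theorem IsHom.image_mem_triples [Fintype α] [Fintype β] {S : SteinerQuasigroup α}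
    {U : SteinerQuasigroup β} {φ : α → β} (h : S.IsHom U φ) (hφ : Function.Injective φ)
    {t : Finset α} (ht : t ∈ S.triples) : t.image φ ∈ U.triples := by
  obtain ⟨a, b, hab, rfl⟩ := S.mem_triples.1 ht
  exact U.mem_triples.2 ⟨φ a, φ b, hφ.ne hab, by simp [image_insert, h a b]⟩

theorem IsAutomorphism.symm {S : SteinerQuasigroup α} {g : Equiv.Perm α}
    (h : S.IsAutomorphism g) : S.IsAutomorphism g.symm := by
  intro a b
  apply g.injective
  rw [h]
  simp

theorem isAut_triples_iff [Fintype α] (S : SteinerQuasigroup α) (g : Equiv.Perm α) :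
    IsAut S.triples g ↔ S.IsAutomorphism g := by
  constructor
  · intro h a b
    obtain rfl | hab := eq_or_ne a b
    · rw [S.idem, S.idem]
    have himage := (h {a, b, S.op a b}).1 (S.mem_triples.2 ⟨a, b, hab, rfl⟩)
    have hmem : g (S.op a b) ∈ ({g a, g b, S.op (g a) (g b)} : Finset α) := by
      rw [← S.eq_of_mem_triples himage (by simp) (by simp) (g.injective.ne hab)]
      simp
    simp only [mem_insert, mem_singleton, g.injective.eq_iff] at hmem
    exact (hmem.resolve_left (S.op_ne_left hab)).resolve_left (S.op_ne_right hab)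
  · refine fun h t => ⟨h.image_mem_triples g.injective, fun ht => ?_⟩
    simpa [image_image] using IsHom.image_mem_triples h.symm g.symm.injective ht

end SteinerQuasigroup

theorem IsSTS.existsUnique_third {α : Type*} {T : Finset (Finset α)} (hT : IsSTS T) {a b : α}
    (hab : a ≠ b) : ∃! c, {a, b, c} ∈ T := by
  obtain ⟨t, ⟨ht, ha, hb⟩, huniq⟩ := hT.2 a b hab
  have hsub : ({a, b} : Finset α) ⊆ t := by simp [insert_subset_iff, ha, hb]
  obtain ⟨c, hc⟩ : ∃ c, t \ {a, b} = {c} := by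
    rw [← card_eq_one, card_sdiff_of_subset hsub, hT.1 t ht, card_pair hab]
  have hthird (d : α) : ({a, b, d} : Finset α) = {a, b} ∪ {d} := by
    ext
    simp
  have htc : t = {a, b, c} := by
    rw [hthird, ← hc, union_sdiff_of_subset hsub]
  refine ⟨c, by simpa only [← htc] using ht, fun d hd => ?_⟩
  have hcard : ({a, b, d} : Finset α).card = 3 := hT.1 _ hd
  have hdt : d ∈ t := by
    rw [← huniq _ ⟨hd, by simp, by simp⟩]
    simp
  have : d ∈ t \ {a, b} := by
    refine mem_sdiff.2 ⟨hdt, fun hdab => ?_⟩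
    rw [hthird, union_eq_left.2 (by simpa using hdab), card_pair hab] at hcard
    omega
  rwa [hc, mem_singleton] at this

namespace SteinerQuasigroup

variable {α β γ : Type*}

theorem exists_triples_eq [Fintype α] {T : Finset (Finset α)} (hT : IsSTS T) :
    ∃ S : SteinerQuasigroup α, S.triples = T := by
  have hne {a c : α} : ({a, a, c} : Finset α) ∉ T := fun h => by
    have hcard := hT.1 _ h
    rw [insert_eq_of_mem (mem_insert_self a {c})] at hcard
    exact absurd card_le_two (by omega : ¬ #{a, c} ≤ 2)
  obtain ⟨S, hS⟩ := exists_of_rel (R := fun a b c => (a = b ∧ b = c) ∨ {a, b, c} ∈ T)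
    (fun a => Or.inl ⟨rfl, rfl⟩)
    (fun {a b c} => Or.imp (by grind) (by rw [insert_comm]; exact id))
    (fun {a b c} => Or.imp (by grind) (by rw [pair_comm]; exact id)) (fun a b => by
      obtain rfl | hab := eq_or_ne a b
      · exact ⟨a, Or.inl ⟨rfl, rfl⟩, fun c hc => (hc.resolve_right hne).2.symm⟩
      · simpa [hab] using hT.existsUnique_third hab)
  refine ⟨S, Finset.ext fun t => S.mem_triples.trans ⟨?_, fun ht => ?_⟩⟩
  · rintro ⟨a, b, hab, rfl⟩
    exact ((hS a b _).1 rfl).resolve_left fun h => hab h.1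
  · obtain ⟨a, b, c, hab, -, -, rfl⟩ := card_eq_three.1 (hT.1 t ht)
    exact ⟨a, b, hab, by rw [(hS a b c).2 (Or.inr ht)]⟩

/-- An embedding of Steiner quasigroups onto a subsystem invariant under all automorphisms, to
which these restrict isomorphically: the algebraic form of `FullEmbedding`. -/
structure IsFullEmbedding (S : SteinerQuasigroup α) (U : SteinerQuasigroup β) (φ : α → β) :
    Prop where
  injective : Function.Injective φ
  isHom : S.IsHom U φ
  restrict : ∀ g, U.IsAutomorphism g → ∃ h, S.IsAutomorphism h ∧ ∀ x, g (φ x) = φ (h x)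
  extend : ∀ h, S.IsAutomorphism h → ∃! g, U.IsAutomorphism g ∧ ∀ x, g (φ x) = φ (h x)

theorem IsHom.isCopy [Fintype α] [Fintype β] {S : SteinerQuasigroup α} {U : SteinerQuasigroup β}
    {φ : α → β} (h : S.IsHom U φ) (hφ : Function.Injective φ) :
    IsCopy S.triples U.triples φ := by
  refine ⟨hφ, fun s hs => h.image_mem_triples hφ hs, fun t ht hsub => ?_⟩
  obtain ⟨p, q, hpq, rfl⟩ := U.mem_triples.1 ht
  obtain ⟨a, -, rfl⟩ := mem_image.1 (hsub (mem_insert_self p _))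
  obtain ⟨b, -, rfl⟩ := mem_image.1 (hsub (mem_insert_of_mem (mem_insert_self q _)))
  exact ⟨{a, b, S.op a b}, S.mem_triples.2 ⟨a, b, ne_of_apply_ne φ hpq, rfl⟩,
    by simp [image_insert, h a b]⟩

theorem IsFullEmbedding.fullEmbedding [Fintype α] [Fintype β] {S : SteinerQuasigroup α}
    {U : SteinerQuasigroup β} {φ : α → β} (H : S.IsFullEmbedding U φ) :
    FullEmbedding S.triples U.triples φ := by
  refine ⟨H.isHom.isCopy H.injective, fun g hg => ?_, ?_⟩
  · obtain ⟨h, -, hgh⟩ := H.restrict g ((U.isAut_triples_iff g).1 hg)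
    rw [image_image, show g ∘ φ = φ ∘ h from funext hgh, ← image_image, image_univ_equiv]
  · simpa only [AutRestrictIso, isAut_triples_iff] using And.intro H.restrict H.extend

theorem isAutomorphism_map {U : SteinerQuasigroup α} {e : α ≃ β} {g : Equiv.Perm β} :
    (U.map e).IsAutomorphism g ↔ U.IsAutomorphism (e.symm.permCongr g) := by
  refine e.symm.forall_congr fun a => e.symm.forall_congr fun b => ?_
  simp [map, Equiv.permCongr_apply, ← e.symm_apply_eq]

theorem IsFullEmbedding.map {S : SteinerQuasigroup α} {U : SteinerQuasigroup β} {φ : α → β}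
    (H : S.IsFullEmbedding U φ) (e : β ≃ γ) : S.IsFullEmbedding (U.map e) (e ∘ φ) where
  injective := e.injective.comp H.injective
  isHom a b := by simp [SteinerQuasigroup.map, H.isHom a b]
  restrict g hg := by
    obtain ⟨h, hh, hgh⟩ := H.restrict _ (isAutomorphism_map.1 hg)
    exact ⟨h, hh, fun x => by simpa [Equiv.permCongr_apply, e.symm_apply_eq] using hgh x⟩
  extend h hh := by
    refine (e.symm.permCongr.existsUnique_congr fun {g} => ?_).2 (H.extend h hh)
    rw [isAutomorphism_map]
    simp [Equiv.permCongr_apply, e.symm_apply_eq]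

theorem isAutomorphism_one (S : SteinerQuasigroup α) : S.IsAutomorphism 1 := fun _ _ => rfl

theorem isFullEmbedding_of_subsingleton [Subsingleton α] (S : SteinerQuasigroup α)
    {U : SteinerQuasigroup β} (hU : ∀ g, U.IsAutomorphism g → g = 1) (φ : α → β) :
    S.IsFullEmbedding U φ where
  injective := Function.injective_of_subsingleton φ
  isHom a b := by rw [Subsingleton.elim a b, S.idem, U.idem]
  restrict g hg := ⟨1, S.isAutomorphism_one, fun x => by simp [hU g hg]⟩
  extend h _ := ⟨1, ⟨U.isAutomorphism_one, fun x => by rw [Subsingleton.elim (h x) x]; rfl⟩,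
    fun g hg => hU g hg.1⟩

theorem IsFullEmbedding.eq_one {S : SteinerQuasigroup α} {U : SteinerQuasigroup β} {φ : α → β}
    (H : S.IsFullEmbedding U φ) (hS : ∀ h, S.IsAutomorphism h → h = 1) {g : Equiv.Perm β}
    (hg : U.IsAutomorphism g) : g = 1 := by
  obtain ⟨h, hh, hgh⟩ := H.restrict g hg
  exact (H.extend h hh).unique ⟨hg, hgh⟩ ⟨U.isAutomorphism_one, fun x => by simp [hS h hh]⟩

end SteinerQuasigroup

/-! ### Systems with a hole and Moore's construction -/

/-- A Steiner triple system on `X ⊕ A` with a hole `X`: every pair of points not contained in `X`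
lies in a unique triple, while no triple has two points in `X`. Here `op a z` is the third point
of the triple of `a` and `z`, with `op a a = a`. -/
structure HoledSystem (X A : Type*) where
  op : A → X ⊕ A → X ⊕ A
  idem : ∀ a, op a (Sum.inr a) = Sum.inr a
  comm : ∀ a b, op a (Sum.inr b) = op b (Sum.inr a)
  cancel : ∀ a z, op a (op a z) = z
  isRight_op_inl : ∀ a x, (op a (Sum.inl x)).isRight

namespace HoledSystem

variable {X A Y B Q T : Type*}

/-- The third point `partner x a` of the triple of `x ∈ X` and `a ∈ A`, which lies in `A`. -/
def partner (E : HoledSystem X A) (x : X) (a : A) : A :=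
  (E.op a (Sum.inl x)).getRight (E.isRight_op_inl a x)

theorem op_inl (E : HoledSystem X A) (a : A) (x : X) :
    E.op a (Sum.inl x) = Sum.inr (E.partner x a) := by
  simp [partner]

theorem op_inr_eq_inl_iff (E : HoledSystem X A) {a b : A} {x : X} :
    E.op a (Sum.inr b) = Sum.inl x ↔ E.partner x a = b := by
  rw [← (Sum.inr_injective (α := X)).eq_iff (a := E.partner x a), ← E.op_inl]
  constructor <;> intro h <;> rw [← h, E.cancel]

theorem partner_partner (E : HoledSystem X A) (x : X) (a : A) :
    E.partner x (E.partner x a) = a := by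
  rw [← op_inr_eq_inl_iff, E.comm, op_inr_eq_inl_iff]

theorem partner_ne (E : HoledSystem X A) (x : X) (a : A) : E.partner x a ≠ a := by
  rw [Ne, ← op_inr_eq_inl_iff, E.idem]
  exact Sum.inr_ne_inl

theorem partner_injective (E : HoledSystem X A) (a : A) :
    Function.Injective fun x => E.partner x a := by
  intro x y h
  have hx := E.op_inr_eq_inl_iff.2 (Eq.refl (E.partner x a))
  rw [show E.partner x a = E.partner y a from h, E.op_inr_eq_inl_iff.2 rfl] at hx
  exact (Sum.inl_injective hx).symm

/-- Relabelling of the points of a holed system. -/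
def congr (E : HoledSystem X A) (eX : X ≃ Y) (eA : A ≃ B) : HoledSystem Y B where
  op b z := (eX.sumCongr eA) (E.op (eA.symm b) ((eX.sumCongr eA).symm z))
  idem b := by simp [E.idem]
  comm b c := by simp [E.comm (eA.symm b)]
  cancel b z := by simp only [Equiv.symm_apply_apply, E.cancel, Equiv.apply_symm_apply]
  isRight_op_inl b y := by simp [E.op_inl]

theorem partner_congr (E : HoledSystem X A) (eX : X ≃ Y) (eA : A ≃ B) (x : X) (a : A) :
    (E.congr eX eA).partner (eX x) (eA a) = eA (E.partner x a) := by
  rw [← op_inr_eq_inl_iff]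
  simp [congr, E.op_inr_eq_inl_iff.2 rfl]

theorem nonempty_of_card [Fintype X] [Fintype A] [Fintype Y] [Fintype B] (E : HoledSystem X A)
    (hX : Fintype.card X = Fintype.card Y) (hA : Fintype.card A = Fintype.card B) :
    Nonempty (HoledSystem Y B) :=
  ⟨E.congr (Fintype.equivOfCardEq hX) (Fintype.equivOfCardEq hA)⟩

/-- The Steiner quasigroup obtained by filling the hole of a holed system. -/
def fillHole (E : HoledSystem X A) (S : SteinerQuasigroup X) : SteinerQuasigroup (X ⊕ A) where
  op
    | Sum.inl x, Sum.inl y => Sum.inl (S.op x y)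
    | Sum.inl x, Sum.inr a => E.op a (Sum.inl x)
    | Sum.inr a, z => E.op a z
  idem
    | Sum.inl x => congrArg Sum.inl (S.idem x)
    | Sum.inr a => E.idem a
  comm
    | Sum.inl x, Sum.inl y => congrArg Sum.inl (S.comm x y)
    | Sum.inl _, Sum.inr _ => rfl
    | Sum.inr _, Sum.inl _ => rfl
    | Sum.inr a, Sum.inr b => E.comm a b
  cancel
    | Sum.inl x, Sum.inl y => congrArg Sum.inl (S.cancel x y)
    | Sum.inl x, Sum.inr a => by simp only [E.op_inl, E.partner_partner]
    | Sum.inr a, z => E.cancel a z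

end HoledSystem

/-- The holed system whose hole is a subsystem of a Steiner quasigroup. -/
def SteinerQuasigroup.punch {α : Type*} (S : SteinerQuasigroup α) (W : α → Prop)
    (hW : ∀ a b, W a → W b → W (S.op a b)) : HoledSystem {a // W a} {a // ¬ W a} where
  op a z := (Equiv.sumCompl W).symm (S.op a (Equiv.sumCompl W z))
  idem a := by simp [S.idem]
  comm a b := by simp [S.comm]
  cancel a z := by simp [S.cancel]
  isRight_op_inl a x := by
    have hop : ¬ W (S.op a x) := fun h => a.2 (by
      have hxa := hW x _ x.2 h
      rwa [S.comm a.1, S.cancel] at hxa)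
    simp [Equiv.sumCompl_symm_apply_of_neg hop]

/-- A group divisible design of triples on `Q × T` with the fibres over `Q` as groups: any two
points `p`, `q` of different fibres lie in a unique triple, whose third point is `op p q` and whose
points lie in three different fibres. The values of `op` inside a fibre are irrelevant. -/
structure GroupDivisible (Q T : Type*) where
  op : Q × T → Q × T → Q × T
  comm : ∀ p q, p.1 ≠ q.1 → op p q = op q p
  fst_ne : ∀ p q, p.1 ≠ q.1 → (op p q).1 ≠ p.1
  cancel : ∀ p q, p.1 ≠ q.1 → op p (op p q) = q

namespace GroupDivisible

variable {X Q T : Type*}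

/-- Filling the groups of a group divisible design with copies of a holed system, all with the
same hole. -/
def fill (D : GroupDivisible Q T) (E : HoledSystem X T) : HoledSystem X (Q × T) where
  op p
    | Sum.inl x => Sum.inr (p.1, E.partner x p.2)
    | Sum.inr q =>
      if p.1 = q.1 then (E.op p.2 (Sum.inr q.2)).map id (Prod.mk p.1) else Sum.inr (D.op p q)
  idem p := by simp [E.idem]
  comm p q := by
    by_cases h : p.1 = q.1
    · simp [h, E.comm p.2]
    · simp [h, Ne.symm h, D.comm p q h]
  cancel p
    | Sum.inl x => by simp [E.op_inr_eq_inl_iff.2 rfl]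
    | Sum.inr q => by
      by_cases h : p.1 = q.1
      · rcases hz : E.op p.2 (Sum.inr q.2) with x | r
        · simp [h, hz, E.op_inr_eq_inl_iff.1 hz]
        · have hr : E.op p.2 (Sum.inr r) = Sum.inr q.2 := by rw [← hz, E.cancel]
          simp [h, hz, hr]
      · simp [h, (D.fst_ne p q h).symm, D.cancel p q h]
  isRight_op_inl _ _ := rfl

end GroupDivisible

namespace SteinerQuasigroup

variable {V X A : Type*} [AddCommGroup A]

/-- The group divisible design on `V × A` whose triples `(v₁, a₁), (v₂, a₂), (v₃, a₃)` lie
over the triples of `V` and satisfy `a₁ + a₂ + a₃ = 0`. -/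
def zeroSumDesign (S : SteinerQuasigroup V) (A : Type*) [AddCommGroup A] :
    GroupDivisible V A where
  op p q := (S.op p.1 q.1, -p.2 - q.2)
  comm p q _ := by rw [S.comm, neg_sub_comm]
  fst_ne p q h := S.op_ne_left h
  cancel p q _ := by simp [S.cancel]

/-- Moore's construction on `X ⊕ V × A`: the fibres over `V` are filled with copies of a holed
system, and the hole with a Steiner quasigroup. -/
def moore (S : SteinerQuasigroup V) (E : HoledSystem X A) (SX : SteinerQuasigroup X) :
    SteinerQuasigroup (X ⊕ V × A) :=
  ((S.zeroSumDesign A).fill E).fillHole SX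

variable {S : SteinerQuasigroup V} {E : HoledSystem X A} {SX : SteinerQuasigroup X}

theorem moore_inl_inr (x : X) (v : V) (a : A) :
    (S.moore E SX).op (Sum.inl x) (Sum.inr (v, a)) = Sum.inr (v, E.partner x a) := rfl

theorem moore_of_eq (v : V) (a b : A) :
    (S.moore E SX).op (Sum.inr (v, a)) (Sum.inr (v, b)) =
      (E.op a (Sum.inr b)).map id (Prod.mk v) :=
  if_pos rfl

theorem moore_of_ne {v w : V} (hvw : v ≠ w) (a b : A) :
    (S.moore E SX).op (Sum.inr (v, a)) (Sum.inr (w, b)) = Sum.inr (S.op v w, -a - b) :=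
  if_neg hvw

theorem isAutomorphism_moore {h : Equiv.Perm V} (hh : S.IsAutomorphism h) :
    (S.moore E SX).IsAutomorphism
      ((Equiv.refl X).sumCongr (h.prodCongr (Equiv.refl A))) := by
  rintro (x | ⟨v, a⟩) (y | ⟨w, b⟩)
  · rfl
  · rfl
  · rfl
  · obtain rfl | hvw := eq_or_ne v w
    · rw [moore_of_eq]
      rcases hz : E.op a (Sum.inr b) with x | c <;> simp [moore_of_eq, hz]
    · simp [moore_of_ne, hvw, hh v w]

end SteinerQuasigroup

/-! ### Subsystems of Moore's construction -/

theorem eq_of_add_eq_add_mul_of_dvd {x x' n m k v : ℕ} (h : x + n = x' + k * m) (hx : x' ≤ x)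
    (hmn : m ∣ n) (hkv : k ≤ v) (hn : v * x < n) : x' = x := by
  by_contra hne
  have hdvd : m ∣ x - x' := by
    rw [← Nat.dvd_add_left hmn, show x - x' + n = k * m by omega]
    exact dvd_mul_left m k
  have hmx : m ≤ x := (Nat.le_of_dvd (by omega) hdvd).trans (Nat.sub_le x x')
  have hkm : k * m ≤ v * x := Nat.mul_le_mul hkv hmx
  omega

namespace SteinerQuasigroup

/-- The point set `W` carries a subsystem. -/
def IsSubquasigroup {α : Type*} (S : SteinerQuasigroup α) (W : Finset α) : Prop :=
  ∀ p ∈ W, ∀ q ∈ W, S.op p q ∈ W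

section Fibres

variable {V X A : Type*}

/-- The part in the hole of a point set of Moore's construction. -/
def holePart [Fintype X] (W : Finset (X ⊕ V × A)) : Finset X :=
  univ.filter fun x => Sum.inl x ∈ W

/-- The fibre over the point `v` of a point set of Moore's construction. -/
def fibre [Fintype A] (W : Finset (X ⊕ V × A)) (v : V) : Finset A :=
  univ.filter fun a => Sum.inr (v, a) ∈ W

theorem mem_holePart [Fintype X] {W : Finset (X ⊕ V × A)} {x : X} :
    x ∈ holePart W ↔ Sum.inl x ∈ W := by
  simp [holePart]

theorem mem_fibre [Fintype A] {W : Finset (X ⊕ V × A)} {v : V} {a : A} :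
    a ∈ fibre W v ↔ Sum.inr (v, a) ∈ W := by
  simp [fibre]

theorem card_eq_card_holePart_add_sum_card_fibre [Fintype X] [Fintype V] [Fintype A]
    (W : Finset (X ⊕ V × A)) : #W = #(holePart W) + ∑ v, #(fibre W v) := by
  have hcard : #W = ∑ p, if p ∈ W then 1 else 0 := by simp
  rw [hcard, Fintype.sum_sum_type, Fintype.sum_prod_type]
  simp [fibre, holePart]

end Fibres

section ClosedSets

open scoped Pointwise

variable {V X A : Type*} [AddCommGroup A] [Fintype A] {S : SteinerQuasigroup V}
  {E : HoledSystem X A} {SX : SteinerQuasigroup X} {W : Finset (X ⊕ V × A)}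

theorem IsSubquasigroup.neg_sub_mem_fibre (hW : (S.moore E SX).IsSubquasigroup W) {v w : V}
    (hvw : v ≠ w) {a b : A} (ha : a ∈ fibre W v) (hb : b ∈ fibre W w) :
    -a - b ∈ fibre W (S.op v w) := by
  rw [mem_fibre] at *
  rw [← moore_of_ne hvw]
  exact hW _ ha _ hb

theorem IsSubquasigroup.add_mem_fibre_iff (hW : (S.moore E SX).IsSubquasigroup W) {v w : V}
    (hvw : v ≠ w) (hw : (fibre W w).Nonempty) {a : A} (ha : a ∈ fibre W v) (h : A) :
    h + a ∈ fibre W v ↔ h ∈ AddAction.stabilizer A (fibre W w) := by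
  rw [← neg_mem_iff (H := AddAction.stabilizer A (fibre W w)), AddAction.mem_stabilizer_finset']
  constructor
  · intro hha b hb
    have hsum := hW.neg_sub_mem_fibre (S.op_ne_left hvw) (hW.neg_sub_mem_fibre hvw ha hb) hha
    rw [S.comm _ v, S.cancel] at hsum
    convert hsum using 1
    rw [vadd_eq_add]
    abel
  · intro hstab
    obtain ⟨b, hb⟩ := hw
    have hsum := hW.neg_sub_mem_fibre (S.op_ne_right hvw) (hW.neg_sub_mem_fibre hvw ha hb)
      (hstab hb)
    rw [S.op_op_right] at hsum
    convert hsum using 1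
    rw [vadd_eq_add]
    abel

theorem IsSubquasigroup.natCard_stabilizer_fibre (hW : (S.moore E SX).IsSubquasigroup W)
    {v w : V} (hvw : v ≠ w) (hv : (fibre W v).Nonempty) (hw : (fibre W w).Nonempty) :
    Nat.card (AddAction.stabilizer A (fibre W w)) = #(fibre W v) := by
  obtain ⟨a, ha⟩ := hv
  have e : AddAction.stabilizer A (fibre W w) ≃ fibre W v :=
    (Equiv.addRight a).subtypeEquiv fun h => (hW.add_mem_fibre_iff hvw hw ha h).symm
  rw [Nat.card_congr e, Nat.card_eq_fintype_card, Fintype.card_coe]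

theorem IsSubquasigroup.card_fibre_le (hW : (S.moore E SX).IsSubquasigroup W) {v w : V}
    (hv : (fibre W v).Nonempty) (hw : (fibre W w).Nonempty) : #(fibre W v) ≤ #(fibre W w) := by
  obtain rfl | hvw := eq_or_ne v w
  · rfl
  rw [← hW.natCard_stabilizer_fibre hvw hv hw, ← Fintype.card_coe, ← Nat.card_eq_fintype_card]
  obtain ⟨b, hb⟩ := hw
  exact Nat.card_le_card_of_injective
    (fun h => ⟨h.1 + b, (AddAction.mem_stabilizer_finset.1 h.2 b).2 hb⟩)
    fun h k hhk => Subtype.ext (add_right_cancel (congrArg Subtype.val hhk))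

theorem IsSubquasigroup.sum_card_fibre [Fintype V] (hW : (S.moore E SX).IsSubquasigroup W)
    {v : V} (hv : (fibre W v).Nonempty) :
    ∑ w, #(fibre W w) = #(univ.filter fun w => (fibre W w).Nonempty) * #(fibre W v) := by
  rw [← sum_filter_add_sum_filter_not univ fun w => (fibre W w).Nonempty,
    sum_eq_zero (s := univ.filter fun w => ¬(fibre W w).Nonempty) (by simp), add_zero]
  refine sum_const_nat fun w hw => ?_
  exact (hW.card_fibre_le (mem_filter.1 hw).2 hv).antisymm
    (hW.card_fibre_le hv (mem_filter.1 hw).2)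

theorem IsSubquasigroup.fibre_subset (hW : (S.moore E SX).IsSubquasigroup W) {x₀ : X}
    {B : Finset A} (hB : ∀ a ∉ B, AddSubgroup.zmultiples (E.partner x₀ a - a) = ⊤)
    (hx₀ : Sum.inl x₀ ∈ W) {v w : V} (hvw : v ≠ w) (hv : (fibre W v).Nonempty)
    (hw : (fibre W w).Nonempty) (hlt : #(fibre W v) < Fintype.card A) : fibre W v ⊆ B := by
  intro b hb
  by_contra hbB
  have hpartner : E.partner x₀ b ∈ fibre W v := by
    rw [mem_fibre] at *
    exact hW _ hx₀ _ hb
  rw [← sub_add_cancel (E.partner x₀ b) b, hW.add_mem_fibre_iff hvw hw hb,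
    ← AddSubgroup.zmultiples_le, hB b hbB, top_le_iff] at hpartner
  have hcard := hW.natCard_stabilizer_fibre hvw hv hw
  rw [hpartner, AddSubgroup.card_top, Nat.card_eq_fintype_card] at hcard
  omega

theorem IsSubquasigroup.exists_forall_inr_mem_imp_eq [Fintype X] [Fintype V]
    (hW : (S.moore E SX).IsSubquasigroup W) {x₀ : X} {B : Finset A}
    (hB : ∀ a ∉ B, AddSubgroup.zmultiples (E.partner x₀ a - a) = ⊤)
    (hXlt : Fintype.card V * Fintype.card X < Fintype.card A)
    (hBlt : Fintype.card V * #B < Fintype.card A)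
    (hcard : #W = Fintype.card X + Fintype.card A) :
    ∃ v, ∀ w a, Sum.inr (w, a) ∈ W → w = v := by
  have hsum := card_eq_card_holePart_add_sum_card_fibre W
  have hhole : #(holePart W) ≤ Fintype.card X := card_le_univ _
  obtain ⟨v, hv⟩ : ∃ v, (fibre W v).Nonempty := by
    by_contra! hempty
    simp only [hempty, card_empty, sum_const_zero] at hsum
    omega
  refine ⟨v, ?_⟩
  by_contra! ⟨w, a, ha, hwv⟩
  have hw : (fibre W w).Nonempty := ⟨a, mem_fibre.2 ha⟩
  rw [hW.sum_card_fibre hv, hcard] at hsum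
  set P := univ.filter fun u => (fibre W u).Nonempty
  have hP : 2 ≤ #P := one_lt_card.2 ⟨v, by simpa [P], w, by simpa [P], hwv.symm⟩
  have hPV : #P ≤ Fintype.card V := card_le_univ _
  have hdvd : #(fibre W v) ∣ Fintype.card A := by
    rw [← hW.natCard_stabilizer_fibre hwv.symm hv hw, ← Nat.card_eq_fintype_card]
    exact AddSubgroup.card_addSubgroup_dvd_card _
  have hfull := eq_of_add_eq_add_mul_of_dvd hsum hhole hdvd hPV hXlt
  have hx₀ : Sum.inl x₀ ∈ W := by
    rw [← mem_holePart, eq_univ_of_card _ hfull]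
    exact mem_univ x₀
  have hlt : #(fibre W v) < Fintype.card A := by
    have hpos := hv.card_pos
    nlinarith
  have hsub := hW.fibre_subset hB hx₀ hwv.symm hv hw hlt
  have hle : #P * #(fibre W v) ≤ Fintype.card V * #B := Nat.mul_le_mul hPV (card_le_card hsub)
  omega

end ClosedSets

end SteinerQuasigroup

/-! ### Automorphisms of Moore's construction -/

theorem exists_addMonoidHom_of_map_neg_sub {A : Type*} [AddCommGroup A] {f k l : A → A}
    (h : ∀ a b, l (-a - b) = -f a - k b) : ∃ φ : A →+ A, ∀ a, f a = φ a + f 0 := by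
  have hfk {a b c d : A} (hab : a + b = c + d) : f a + k b = f c + k d := by
    rw [← neg_inj, neg_add', neg_add', ← h, ← h, ← neg_add', ← neg_add', hab]
  refine ⟨AddMonoidHom.mk' (fun a => f a - f 0) fun a b => ?_, fun a => (sub_add_cancel _ _).symm⟩
  have hab : f (a + b) + k 0 = f a + k b := hfk (add_zero _)
  have hb : f b + k 0 = f 0 + k b := hfk (add_comm _ _)
  grind

/-- The only affine injection of the additive group `A` inducing an endomorphism of a holed system
on `X ⊕ A` is the identity. -/
def HoledSystem.IsAffineRigid {X A : Type*} [AddCommGroup A] (E : HoledSystem X A) : Prop :=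
  ∀ (φ : A →+ A) (c : A) (π : X → X), Function.Injective φ →
    (∀ x a, φ (E.partner x a) + c = E.partner (π x) (φ a + c)) →
      (∀ a, φ a + c = a) ∧ ∀ x, π x = x

namespace SteinerQuasigroup

section OverPoint

variable {V X A : Type*} [Fintype X] [Fintype A]

/-- The union of the hole and the fibre over a point `v` in Moore's construction. -/
def overPoint (X A : Type*) [Fintype X] [Fintype A] {V : Type*} (v : V) : Finset (X ⊕ V × A) :=
  univ.disjSum ({v} ×ˢ univ)

theorem inl_mem_overPoint (v : V) (x : X) : Sum.inl x ∈ overPoint X A v := by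
  simp [overPoint]

theorem inr_mem_overPoint {v w : V} {a : A} : Sum.inr (w, a) ∈ overPoint X A v ↔ w = v := by
  simp [overPoint, eq_comm]

theorem card_overPoint (v : V) : #(overPoint X A v) = Fintype.card X + Fintype.card A := by
  simp [overPoint, card_disjSum]

end OverPoint

variable {V X A : Type*} [AddCommGroup A]

section OverPoint

variable [Fintype X] [Fintype A]

theorem isSubquasigroup_overPoint (S : SteinerQuasigroup V) (E : HoledSystem X A)
    (SX : SteinerQuasigroup X) (v : V) : (S.moore E SX).IsSubquasigroup (overPoint X A v) := by
  rintro (x | ⟨u, a⟩) hp (y | ⟨w, b⟩) hq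
  · exact inl_mem_overPoint v _
  · rw [moore_inl_inr]
    exact inr_mem_overPoint.2 (inr_mem_overPoint.1 hq)
  · rw [comm, moore_inl_inr]
    exact inr_mem_overPoint.2 (inr_mem_overPoint.1 hp)
  · obtain rfl := inr_mem_overPoint.1 hp
    obtain rfl := inr_mem_overPoint.1 hq
    rw [moore_of_eq]
    rcases E.op a (Sum.inr b) with x | c
    · exact inl_mem_overPoint _ x
    · exact inr_mem_overPoint.2 rfl

theorem IsSubquasigroup.map {α : Type*} {U : SteinerQuasigroup α} {W : Finset α}
    (hW : U.IsSubquasigroup W) {g : Equiv.Perm α} (hg : U.IsAutomorphism g) :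
    U.IsSubquasigroup (W.map g.toEmbedding) := by
  intro p hp q hq
  obtain ⟨p', hp', rfl⟩ := mem_map.1 hp
  obtain ⟨q', hq', rfl⟩ := mem_map.1 hq
  exact mem_map.2 ⟨_, hW p' hp' q' hq', hg p' q'⟩

/-- Every subsystem of Moore's construction with as many points as those over a point of `V` is one
of these. -/
def FibresRecognizable (S : SteinerQuasigroup V) (E : HoledSystem X A)
    (SX : SteinerQuasigroup X) : Prop :=
  ∀ W, (S.moore E SX).IsSubquasigroup W → #W = Fintype.card X + Fintype.card A →
    ∃ v, W = overPoint X A v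

theorem fibresRecognizable_of_card_mul_lt [Fintype V] {S : SteinerQuasigroup V}
    {E : HoledSystem X A} {SX : SteinerQuasigroup X} {x₀ : X} {B : Finset A}
    (hB : ∀ a ∉ B, AddSubgroup.zmultiples (E.partner x₀ a - a) = ⊤)
    (hXlt : Fintype.card V * Fintype.card X < Fintype.card A)
    (hBlt : Fintype.card V * #B < Fintype.card A) : S.FibresRecognizable E SX := by
  intro W hW hcard
  obtain ⟨v, hv⟩ := hW.exists_forall_inr_mem_imp_eq hB hXlt hBlt hcard
  refine ⟨v, eq_of_subset_of_card_le ?_ (by rw [hcard, card_overPoint])⟩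
  rintro (x | ⟨w, a⟩) hp
  · exact inl_mem_overPoint v x
  · exact inr_mem_overPoint.2 (hv w a hp)

theorem FibresRecognizable.exists_apply_mem_overPoint_iff {S : SteinerQuasigroup V}
    {E : HoledSystem X A} {SX : SteinerQuasigroup X} (hS : S.FibresRecognizable E SX)
    {g : Equiv.Perm (X ⊕ V × A)} (hg : (S.moore E SX).IsAutomorphism g) (v : V) :
    ∃ w, ∀ p, g p ∈ overPoint X A w ↔ p ∈ overPoint X A v := by
  obtain ⟨w, hw⟩ := hS _ ((isSubquasigroup_overPoint S E SX v).map hg)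
    (by rw [card_map, card_overPoint])
  exact ⟨w, fun p => by rw [← hw]; simp⟩

theorem FibresRecognizable.exists_apply_eq [Nontrivial V] {S : SteinerQuasigroup V}
    {E : HoledSystem X A} {SX : SteinerQuasigroup X} (hS : S.FibresRecognizable E SX)
    {g : Equiv.Perm (X ⊕ V × A)} (hg : (S.moore E SX).IsAutomorphism g) :
    ∃ (h : V → V) (π : X → X) (α : V → A → A), Function.Injective h ∧
      (∀ x, g (Sum.inl x) = Sum.inl (π x)) ∧ ∀ v a, g (Sum.inr (v, a)) = Sum.inr (h v, α v a) := by
  choose h hh using hS.exists_apply_mem_overPoint_iff hg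
  have hinj : Function.Injective h := by
    intro v w hvw
    have hmem := hh v (Sum.inr (v, 0))
    rw [hvw, hh w, inr_mem_overPoint, inr_mem_overPoint] at hmem
    exact hmem.2 rfl
  have hinl (x : X) : ∃ y, g (Sum.inl x) = Sum.inl y := by
    obtain ⟨v, w, hvw⟩ := exists_pair_ne V
    have hv := (hh v (Sum.inl x)).2 (inl_mem_overPoint v x)
    have hw := (hh w (Sum.inl x)).2 (inl_mem_overPoint w x)
    rcases hgx : g (Sum.inl x) with y | ⟨u, a⟩
    · exact ⟨y, rfl⟩
    · rw [hgx, inr_mem_overPoint] at hv hw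
      exact absurd (hinj (hv.symm.trans hw)) hvw
  have hinr (v : V) (a : A) : ∃ b, g (Sum.inr (v, a)) = Sum.inr (h v, b) := by
    obtain ⟨w, hwv⟩ := exists_ne v
    have hv := (hh v (Sum.inr (v, a))).2 (inr_mem_overPoint.2 rfl)
    have hw := (hh w (Sum.inr (v, a))).not.2 (inr_mem_overPoint.not.2 hwv.symm)
    rcases hgp : g (Sum.inr (v, a)) with y | ⟨u, b⟩
    · exact absurd (hgp ▸ inl_mem_overPoint (h w) y) hw
    · rw [hgp, inr_mem_overPoint] at hv
      exact ⟨b, by rw [hv]⟩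
  choose π hπ using hinl
  choose α hα using hinr
  exact ⟨h, π, α, hinj, hπ, hα⟩

end OverPoint

variable {S : SteinerQuasigroup V} {E : HoledSystem X A} {SX : SteinerQuasigroup X}
  {g : Equiv.Perm (X ⊕ V × A)} {h : V → V} {π : X → X} {α : V → A → A}

theorem IsAutomorphism.apply_op_of_moore (hg : (S.moore E SX).IsAutomorphism g)
    (hinj : Function.Injective h) (hα : ∀ v a, g (Sum.inr (v, a)) = Sum.inr (h v, α v a))
    {v w : V} (hvw : v ≠ w) (a b : A) :
    h (S.op v w) = S.op (h v) (h w) ∧ α (S.op v w) (-a - b) = -α v a - α w b := by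
  have hop := hg (Sum.inr (v, a)) (Sum.inr (w, b))
  rw [moore_of_ne hvw, hα, hα, hα, moore_of_ne (hinj.ne hvw)] at hop
  exact Prod.ext_iff.1 (Sum.inr_injective hop)

theorem IsAutomorphism.eq_id_of_moore [Nontrivial V] (hE : E.IsAffineRigid)
    (hg : (S.moore E SX).IsAutomorphism g) (hinj : Function.Injective h)
    (hπ : ∀ x, g (Sum.inl x) = Sum.inl (π x))
    (hα : ∀ v a, g (Sum.inr (v, a)) = Sum.inr (h v, α v a)) (v : V) :
    (∀ a, α v a = a) ∧ ∀ x, π x = x := by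
  obtain ⟨w, hwv⟩ := exists_ne v
  obtain ⟨φ, hφ⟩ := exists_addMonoidHom_of_map_neg_sub
    fun a b => (hg.apply_op_of_moore hinj hα hwv.symm a b).2
  have hφinj : Function.Injective φ := by
    intro a b hab
    have hαab : α v a = α v b := by rw [hφ, hab, ← hφ]
    have hgab : g (Sum.inr (v, a)) = g (Sum.inr (v, b)) := by rw [hα, hα, hαab]
    exact congrArg Prod.snd (Sum.inr_injective (g.injective hgab))
  refine (hE φ (α v 0) π hφinj fun x a => ?_).imp_left fun H a => (hφ a).trans (H a)
  have hpartner := hg (Sum.inl x) (Sum.inr (v, a))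
  rw [moore_inl_inr, hα, hα, hπ, moore_inl_inr] at hpartner
  rw [← hφ, ← hφ]
  exact congrArg Prod.snd (Sum.inr_injective hpartner)

theorem FibresRecognizable.exists_isAutomorphism [Finite V] [Nontrivial V] [Fintype X]
    [Fintype A] (hS : S.FibresRecognizable E SX) (hE : E.IsAffineRigid)
    (hg : (S.moore E SX).IsAutomorphism g) :
    ∃ h : Equiv.Perm V, S.IsAutomorphism h ∧
      g = (Equiv.refl X).sumCongr (h.prodCongr (Equiv.refl A)) := by
  obtain ⟨h, π, α, hinj, hπ, hα⟩ := hS.exists_apply_eq hg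
  have hid := hg.eq_id_of_moore hE hinj hπ hα
  refine ⟨Equiv.ofBijective h (Finite.injective_iff_bijective.1 hinj), fun v w => ?_, ?_⟩
  · obtain rfl | hvw := eq_or_ne v w
    · rw [idem, idem]
    · exact (hg.apply_op_of_moore hinj hα hvw 0 0).1
  · ext (x | ⟨v, a⟩)
    · rw [hπ, (hid (Classical.arbitrary V)).2]
      rfl
    · rw [hα, (hid v).1]
      rfl

theorem FibresRecognizable.isFullEmbedding_moore [Finite V] [Nontrivial V] [Fintype X]
    [Fintype A] (hS : S.FibresRecognizable E SX) (hE : E.IsAffineRigid) :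
    S.IsFullEmbedding (S.moore E SX) fun v => Sum.inr (v, 0) where
  injective v w hvw := congrArg Prod.fst (Sum.inr_injective hvw)
  isHom v w := by
    obtain rfl | hvw := eq_or_ne v w
    · rw [idem, idem]
    · simp [moore_of_ne hvw]
  restrict g hg := by
    obtain ⟨h, hh, rfl⟩ := hS.exists_isAutomorphism hE hg
    exact ⟨h, hh, fun v => rfl⟩
  extend h hh := by
    refine ⟨_, ⟨isAutomorphism_moore hh, fun v => rfl⟩, ?_⟩
    rintro g ⟨hg, hgv⟩
    obtain ⟨k, -, rfl⟩ := hS.exists_isAutomorphism hE hg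
    have hkh : k = h := Equiv.ext fun v => congrArg Prod.fst (Sum.inr_injective (hgv v))
    rw [hkh]

end SteinerQuasigroup

/-! ### The twisted matching -/

/-- The reduction modulo 2 of residues modulo an even number. -/
def parity {n : ℕ} (hn : 2 ∣ n) : ZMod n →+* ZMod 2 :=
  ZMod.castHom hn (ZMod 2)

/-- The fixed-point-free involution of `ℕ` underlying `twistedMatching`: it exchanges consecutive
numbers, up to the pairs `{0, 3}` and `{4, 9}`. -/
def twistedSwap (k : ℕ) : ℕ :=
  if k = 0 then 3 else if k = 3 then 0 else if k = 4 then 9 else if k = 9 then 4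
  else if k % 2 = 0 ↔ 9 < k then k + 1 else k - 1

/-- A perfect matching of `ZMod n`, for `n` even, whose edges join residues of different parity and
whose only affine symmetry is the identity. -/
def twistedMatching {n : ℕ} (z : ZMod n) : ZMod n :=
  twistedSwap z.val

theorem twistedSwap_of_le {k : ℕ} (hk : 10 ≤ k) :
    twistedSwap k = if k % 2 = 0 then k + 1 else k - 1 := by
  grind [twistedSwap]

theorem twistedSwap_twistedSwap (k : ℕ) : twistedSwap (twistedSwap k) = k := by
  obtain hk | hk := lt_or_ge k 10
  · interval_cases k <;> rfl
  · rw [twistedSwap_of_le hk]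
    split_ifs <;> rw [twistedSwap_of_le (by omega)] <;> split_ifs <;> omega

theorem twistedSwap_sub_cases (k : ℕ) :
    (k = 0 ∧ (twistedSwap k - k : ℤ) = 3) ∨ (k = 3 ∧ (twistedSwap k - k : ℤ) = -3) ∨
    (k = 4 ∧ (twistedSwap k - k : ℤ) = 5) ∨ (k = 9 ∧ (twistedSwap k - k : ℤ) = -5) ∨
    (twistedSwap k - k : ℤ) = 1 ∨ (twistedSwap k - k : ℤ) = -1 := by
  unfold twistedSwap
  split_ifs <;> omega

theorem twistedSwap_lt {n k : ℕ} (hn : 2 ∣ n) (hn₁₂ : 12 < n) (hk : k < n) :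
    twistedSwap k < n := by
  unfold twistedSwap
  split_ifs <;> omega

section TwistedMatching

variable {n : ℕ}

theorem twistedMatching_natCast {k : ℕ} (hk : k < n) :
    twistedMatching (k : ZMod n) = twistedSwap k := by
  rw [twistedMatching, ZMod.val_natCast_of_lt hk]

theorem twistedMatching_natCast_sub_self {k : ℕ} (hk : k < n) :
    twistedMatching (k : ZMod n) - k = ((twistedSwap k - k : ℤ) : ZMod n) := by
  simp [twistedMatching_natCast hk]

theorem twistedMatching_twistedMatching [NeZero n] (hn : 2 ∣ n) (hn₁₂ : 12 < n) (z : ZMod n) :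
    twistedMatching (twistedMatching z) = z := by
  rw [twistedMatching.eq_1 z, twistedMatching_natCast (twistedSwap_lt hn hn₁₂ z.val_lt),
    twistedSwap_twistedSwap, ZMod.natCast_zmod_val]

theorem parity_twistedMatching [NeZero n] (hn : 2 ∣ n) (z : ZMod n) :
    parity hn (twistedMatching z) = parity hn z + 1 := by
  have hcases := twistedSwap_sub_cases z.val
  have hmod : (twistedSwap z.val : ZMod 2) = (z.val + 1 : ℕ) := by
    rw [ZMod.natCast_eq_natCast_iff']
    omega
  conv_rhs => rw [← ZMod.natCast_zmod_val z]
  rw [twistedMatching, map_natCast, map_natCast, hmod, Nat.cast_succ]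

theorem twistedMatching_sub_self_eq_intCast_iff [NeZero n] (hn : 10 < n) (z : ZMod n) {d : ℤ}
    (hd : |d| ≤ 5) : twistedMatching z - z = d ↔ (twistedSwap z.val - z.val : ℤ) = d := by
  have hsub : twistedMatching z - z = ((twistedSwap z.val - z.val : ℤ) : ZMod n) := by
    simp [twistedMatching]
  refine ⟨fun h => ?_, fun h => by rw [hsub, h]⟩
  rw [hsub, ZMod.intCast_eq_intCast_iff_dvd_sub] at h
  have hcases := twistedSwap_sub_cases z.val
  have hzero := Int.eq_zero_of_abs_lt_dvd h (by rw [abs_le] at hd; rw [abs_lt]; omega)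
  omega

theorem zmultiples_twistedMatching_sub_self [NeZero n] {z : ZMod n}
    (hz : z ∉ ({0, 3, 4, 9} : Finset (ZMod n))) :
    AddSubgroup.zmultiples (twistedMatching z - z) = ⊤ := by
  have htop : AddSubgroup.zmultiples (1 : ZMod n) = ⊤ :=
    (AddSubgroup.eq_top_iff' _).2 fun a => ⟨a.val, by simp⟩
  have hval {k : ℕ} (hk : z.val = k) : z = k := by rw [← hk, ZMod.natCast_zmod_val]
  have hsub : twistedMatching z - z = ((twistedSwap z.val - z.val : ℤ) : ZMod n) := by
    simp [twistedMatching]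
  simp only [mem_insert, mem_singleton, not_or] at hz
  obtain ⟨h0, h3, h4, h9⟩ := hz
  obtain ⟨h, -⟩ | ⟨h, -⟩ | ⟨h, -⟩ | ⟨h, -⟩ | h | h := twistedSwap_sub_cases z.val
  · exact absurd (by simpa using hval h) h0
  · exact absurd (by simpa using hval h) h3
  · exact absurd (by simpa using hval h) h4
  · exact absurd (by simpa using hval h) h9
  · rw [hsub, h, Int.cast_one, htop]
  · rw [hsub, h, Int.cast_neg, Int.cast_one, AddSubgroup.zmultiples_neg, htop]

theorem eq_or_of_twistedMatching_sub_self_eq [NeZero n] (hn : 10 < n) {y z : ZMod n}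
    (h : twistedMatching y - y = twistedMatching z - z) :
    y = z ∨ twistedMatching y - y = 1 ∨ twistedMatching y - y = -1 := by
  have hcases := twistedSwap_sub_cases y.val
  have hcases' := twistedSwap_sub_cases z.val
  have hy := (twistedMatching_sub_self_eq_intCast_iff hn y (by rw [abs_le]; omega)).2 rfl
  have hz := (twistedMatching_sub_self_eq_intCast_iff hn z (by rw [abs_le]; omega)).1
    (h.symm.trans hy)
  by_cases hyz : y.val = z.val
  · exact Or.inl (ZMod.val_injective n hyz)
  · obtain h1 | h1 :
        (twistedSwap y.val - y.val : ℤ) = 1 ∨ (twistedSwap y.val - y.val : ℤ) = -1 := by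
      omega
    · exact Or.inr (Or.inl (by rw [hy, h1, Int.cast_one]))
    · exact Or.inr (Or.inr (by rw [hy, h1, Int.cast_neg, Int.cast_one]))

theorem eq_natCast_of_twistedMatching_sub_self_eq [NeZero n] (hn : 10 < n) {z : ZMod n} {k : ℕ}
    {d : ℤ} (hk : (k, d) ∈ ({(0, 3), (3, -3), (4, 5), (9, -5)} : Finset (ℕ × ℤ)))
    (h : twistedMatching z - z = d) : z = k := by
  have hcases := twistedSwap_sub_cases z.val
  simp only [mem_insert, mem_singleton, Prod.mk.injEq] at hk
  have hd := (twistedMatching_sub_self_eq_intCast_iff hn z (by rw [abs_le]; omega)).1 h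
  rw [← ZMod.natCast_zmod_val z, show z.val = k by omega]

theorem map_one_eq_of_commute_twistedMatching [NeZero n] (hn : 12 < n) {φ : ZMod n →+ ZMod n}
    {c : ZMod n} (hφ : Function.Injective φ)
    (hsub : ∀ a, twistedMatching (φ a + c) - (φ a + c) = φ (twistedMatching a - a)) :
    φ 1 = 1 ∨ φ 1 = -1 := by
  have h10 : twistedMatching (10 : ZMod n) - 10 = 1 := by
    simpa [twistedSwap] using twistedMatching_natCast_sub_self (n := n) (k := 10) (by omega)
  have h12 : twistedMatching (12 : ZMod n) - 12 = 1 := by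
    simpa [twistedSwap] using twistedMatching_natCast_sub_self (n := n) (k := 12) (by omega)
  have hsub10 := hsub 10
  have hsub12 := hsub 12
  rw [h10] at hsub10
  rw [h12] at hsub12
  have hor := eq_or_of_twistedMatching_sub_self_eq (by omega) (hsub10.trans hsub12.symm)
  rw [hsub10] at hor
  refine hor.resolve_left fun heq => ?_
  have h : ((10 : ℕ) : ZMod n) = (12 : ℕ) := hφ (add_right_cancel heq)
  rw [ZMod.natCast_eq_natCast_iff', Nat.mod_eq_of_lt (by omega), Nat.mod_eq_of_lt hn] at h
  omega

theorem map_add_eq_of_commute_twistedMatching [NeZero n] (hn : 12 < n) {φ : ZMod n →+ ZMod n}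
    {c : ZMod n} (hφ : Function.Injective φ)
    (hcomm : ∀ a, φ (twistedMatching a) + c = twistedMatching (φ a + c)) (a : ZMod n) :
    φ a + c = a := by
  have hsub (a : ZMod n) :
      twistedMatching (φ a + c) - (φ a + c) = φ (twistedMatching a - a) := by
    rw [← hcomm, map_sub, add_sub_add_right_eq_sub]
  have hφa (a : ZMod n) : φ a = a * φ 1 := by simpa using ZMod.map_smul φ a 1
  have h0 : twistedMatching (0 : ZMod n) - 0 = 3 := by
    simpa [twistedSwap] using twistedMatching_natCast_sub_self (n := n) (k := 0) (by omega)
  have h4 : twistedMatching (4 : ZMod n) - 4 = 5 := by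
    simpa [twistedSwap] using twistedMatching_natCast_sub_self (n := n) (k := 4) (by omega)
  have hn₁₀ : 10 < n := by omega
  have hsub0 := hsub 0
  have hsub4 := hsub 4
  rw [h0, map_zero, zero_add, hφa] at hsub0
  rw [h4, hφa 4, hφa 5] at hsub4
  obtain h1 | h1 := map_one_eq_of_commute_twistedMatching hn hφ hsub
  · rw [h1, mul_one] at hsub0
    have hc := eq_natCast_of_twistedMatching_sub_self_eq (k := 0) (d := 3) hn₁₀ (by decide)
      (by exact_mod_cast hsub0)
    rw [hφa, h1, hc]
    simp
  · rw [h1, mul_neg_one] at hsub0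
    rw [h1, mul_neg_one, mul_neg_one] at hsub4
    have hc := eq_natCast_of_twistedMatching_sub_self_eq (k := 3) (d := -3) hn₁₀ (by decide)
      (by exact_mod_cast hsub0)
    have hc' := eq_natCast_of_twistedMatching_sub_self_eq (k := 9) (d := -5) hn₁₀ (by decide)
      (by exact_mod_cast hsub4)
    have h : ((10 : ℕ) : ZMod n) = (0 : ℕ) := by
      rw [hc] at hc'
      push_cast at hc' ⊢
      linear_combination -hc'
    rw [ZMod.natCast_eq_natCast_iff', Nat.mod_eq_of_lt (by omega), Nat.zero_mod] at h
    omega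

end TwistedMatching

/-! ### Rigid labellings -/

/-- A labelling of a holed system by the residues modulo `n` in which the matching of `x₀` is the
twisted matching, while those of the other points of the hole do not reverse parity. -/
structure HoledSystem.IsRigidLabelling {X : Type*} {n : ℕ} (hn : 2 ∣ n)
    (E : HoledSystem X (ZMod n)) (x₀ : X) : Prop where
  partner_eq : ∀ a, E.partner x₀ a = twistedMatching a
  exists_parity_eq : ∀ x, x ≠ x₀ → ∃ a, parity hn (E.partner x a) = parity hn a

theorem parity_map {n : ℕ} [NeZero n] (hn : 2 ∣ n) {φ : ZMod n →+ ZMod n}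
    (hφ : Function.Injective φ) (a : ZMod n) : parity hn (φ a) = parity hn a := by
  have hφa (a : ZMod n) : φ a = a * φ 1 := by simpa using ZMod.map_smul φ a 1
  obtain ⟨b, hb⟩ := Finite.injective_iff_surjective.1 hφ 1
  have hunit : parity hn b * parity hn (φ 1) = 1 := by
    rw [← map_mul, ← hφa, hb, map_one]
  have hone : ∀ y z : ZMod 2, y * z = 1 → z = 1 := by decide
  rw [hφa, map_mul, hone _ _ hunit, mul_one]

theorem HoledSystem.IsRigidLabelling.isAffineRigid {X : Type*} {n : ℕ} {hn : 2 ∣ n}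
    (hn₁₂ : 12 < n) {E : HoledSystem X (ZMod n)} {x₀ : X} (hE : E.IsRigidLabelling hn x₀) :
    E.IsAffineRigid := by
  have : NeZero n := ⟨by omega⟩
  intro φ c π hφ hcomm
  have hπ : π x₀ = x₀ := by
    by_contra hne
    obtain ⟨a, ha⟩ := hE.exists_parity_eq _ hne
    obtain ⟨b, hb⟩ := Finite.injective_iff_surjective.1 hφ (a - c)
    obtain rfl := eq_sub_iff_add_eq.1 hb
    rw [← hcomm, map_add, map_add, parity_map hn hφ, parity_map hn hφ, hE.partner_eq,
      parity_twistedMatching, add_left_inj] at ha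
    exact absurd (add_eq_left.1 ha) one_ne_zero
  have hid : ∀ a, φ a + c = a := map_add_eq_of_commute_twistedMatching hn₁₂ hφ fun a => by
    rw [← hE.partner_eq, ← hE.partner_eq, hcomm, hπ]
  refine ⟨hid, fun x => E.partner_injective 0 ?_⟩
  have hx := hcomm x 0
  rw [hid, hid] at hx
  exact hx.symm

/-- An involution exchanging a set with its complement presents the whole type as two copies of
that set. -/
def sumEquivOfInvolutive {A : Type*} {f : A → A} (hf : Function.Involutive f) {p : A → Prop}
    (hp : ∀ a, p (f a) ↔ ¬ p a) : {a // p a} ⊕ {a // p a} ≃ A :=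
  (Equiv.sumCongr (Equiv.refl _)
    (hf.toPerm.subtypeEquiv fun a => by simp [hp])).trans (Equiv.sumCompl p)

theorem sumEquivOfInvolutive_swap {A : Type*} {f : A → A} (hf : Function.Involutive f)
    {p : A → Prop} (hp : ∀ a, p (f a) ↔ ¬ p a) (s : {a // p a} ⊕ {a // p a}) :
    sumEquivOfInvolutive hf hp s.swap = f (sumEquivOfInvolutive hf hp s) := by
  rcases s with a | a
  · rfl
  · exact (hf a).symm

theorem sumEquivOfInvolutive_mem_iff {A : Type*} {f : A → A} (hf : Function.Involutive f)
    {p : A → Prop} (hp : ∀ a, p (f a) ↔ ¬ p a) (s : {a // p a} ⊕ {a // p a}) :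
    p (sumEquivOfInvolutive hf hp s) ↔ s.isLeft := by
  rcases s with a | a
  · exact iff_of_true a.2 rfl
  · exact iff_of_false (fun h => (hp a).1 h a.2) Bool.false_ne_true

theorem exists_equiv_of_involutive {A B : Type*} [Fintype A] [Fintype B]
    (hcard : Fintype.card A = Fintype.card B) {f : A → A} {f' : B → B}
    (hf : Function.Involutive f) (hf' : Function.Involutive f') {p : A → Prop} {p' : B → Prop}
    (hp : ∀ a, p (f a) ↔ ¬ p a) (hp' : ∀ b, p' (f' b) ↔ ¬ p' b) :
    ∃ e : A ≃ B, (∀ a, e (f a) = f' (e a)) ∧ ∀ a, p' (e a) ↔ p a := by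
  let σ := sumEquivOfInvolutive hf hp
  let σ' := sumEquivOfInvolutive hf' hp'
  have hhalf : Fintype.card {a // p a} = Fintype.card {b // p' b} := by
    have hA := Fintype.card_congr σ
    have hB := Fintype.card_congr σ'
    rw [Fintype.card_sum] at hA hB
    omega
  let e₀ := Fintype.equivOfCardEq hhalf
  refine ⟨σ.symm.trans ((e₀.sumCongr e₀).trans σ'), σ.forall_congr_right.1 fun s => ?_,
    σ.forall_congr_right.1 fun s => ?_⟩
  · rw [← sumEquivOfInvolutive_swap hf hp]
    simp only [Equiv.trans_apply, σ, σ', Equiv.symm_apply_apply,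
      ← sumEquivOfInvolutive_swap hf' hp']
    rcases s with a | a <;> rfl
  · simp only [Equiv.trans_apply, σ, σ', Equiv.symm_apply_apply, sumEquivOfInvolutive_mem_iff]
    rcases s with a | a <;> rfl

namespace HoledSystem

variable {X A : Type*}

theorem exists_notMem_partner_notMem [Fintype A] (E : HoledSystem X A) (x : X) {B : Finset A}
    (hB : 2 * #B < Fintype.card A) : ∃ a ∉ B, E.partner x a ∉ B := by
  by_contra! h
  have hcover : (univ : Finset A) ⊆ B ∪ B.image (E.partner x) := fun a _ =>
    mem_union.2 (or_iff_not_imp_left.2 fun ha =>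
      mem_image.2 ⟨_, h a ha, E.partner_partner x a⟩)
  have hcard := (card_le_card hcover).trans (card_union_le _ _)
  have himage : #(B.image (E.partner x)) ≤ #B := card_image_le
  rw [card_univ] at hcard
  omega

theorem exists_independent [Fintype A] (E : HoledSystem X A) (x₀ : X) (s : Finset X)
    (hs : x₀ ∉ s) (hcard : 8 * #s < Fintype.card A) :
    ∃ F : Finset A, #F ≤ 2 * #s ∧ (∀ a ∈ F, E.partner x₀ a ∉ F) ∧
      ∀ x ∈ s, ∃ a ∈ F, E.partner x a ∈ F := by
  induction s using Finset.induction_on with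
  | empty => exact ⟨∅, by simp⟩
  | insert x s hxs ih =>
    rw [card_insert_of_notMem hxs] at hcard ⊢
    rw [mem_insert, not_or] at hs
    obtain ⟨F, hF, hind, hedge⟩ := ih hs.2 (by omega)
    obtain ⟨a, ha, hxa⟩ := E.exists_notMem_partner_notMem x
      (B := F ∪ F.image (E.partner x₀)) (by
        have hunion := card_union_le F (F.image (E.partner x₀))
        have himage : #(F.image (E.partner x₀)) ≤ #F := card_image_le
        omega)
    have hpartner := E.partner_partner x₀
    have hne : E.partner x₀ a ≠ E.partner x a := (E.partner_injective a).ne hs.1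
    have hne' : E.partner x₀ (E.partner x a) ≠ a := fun h =>
      hne (by rw [← congrArg (E.partner x₀) h, hpartner])
    refine ⟨insert a (insert (E.partner x a) F), ?_, ?_, ?_⟩
    · have h₁ := card_insert_le a (insert (E.partner x a) F)
      have h₂ := card_insert_le (E.partner x a) F
      omega
    · have hself := E.partner_ne x₀
      grind
    · intro y hy
      rcases mem_insert.1 hy with rfl | hy
      · exact ⟨a, by simp, by simp⟩
      · obtain ⟨b, hb, hyb⟩ := hedge y hy
        exact ⟨b, by simp [hb], by simp [hyb]⟩

theorem exists_isRigidLabelling [Fintype X] [Fintype A] (E : HoledSystem X A) (x₀ : X) {n : ℕ}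
    (hn : 2 ∣ n) (hn₁₂ : 12 < n) (hcard : Fintype.card A = n) (hX : 8 * Fintype.card X < n) :
    ∃ e : A ≃ ZMod n, (E.congr (Equiv.refl X) e).IsRigidLabelling hn x₀ := by
  have : NeZero n := ⟨by omega⟩
  obtain ⟨F, -, hind, hedge⟩ := E.exists_independent x₀ (univ.erase x₀) (notMem_erase _ _) (by
    have hle := card_le_univ (univ.erase x₀)
    omega)
  let ν := Fintype.equivFin A
  let p (a : A) : Prop := a ∈ F ∨ (E.partner x₀ a ∉ F ∧ ν a < ν (E.partner x₀ a))
  have hp (a : A) : p (E.partner x₀ a) ↔ ¬ p a := by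
    have hν : ν a ≠ ν (E.partner x₀ a) := ν.injective.ne (E.partner_ne x₀ a).symm
    have ha := hind a
    simp only [p, E.partner_partner]
    grind
  have hpar (z : ZMod n) : parity hn (twistedMatching z) = 0 ↔ ¬ parity hn z = 0 := by
    rw [parity_twistedMatching]
    generalize parity hn z = y
    revert y
    decide
  obtain ⟨e, he, hpe⟩ := exists_equiv_of_involutive (hcard.trans (ZMod.card n).symm)
    (E.partner_partner x₀) (twistedMatching_twistedMatching hn hn₁₂) hp
    (p' := fun z => parity hn z = 0) hpar
  have hpartner (x : X) (a : A) :
      (E.congr (Equiv.refl X) e).partner x (e a) = e (E.partner x a) :=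
    E.partner_congr (Equiv.refl X) e x a
  refine ⟨e, e.forall_congr_right.1 fun a => by rw [hpartner, he], fun x hx => ?_⟩
  obtain ⟨a, ha, hxa⟩ := hedge x (mem_erase.2 ⟨hx, mem_univ x⟩)
  exact ⟨e a, by rw [hpartner, (hpe a).2 (Or.inl ha), (hpe _).2 (Or.inl hxa)]⟩

end HoledSystem

/-! ### Systems with a large hole -/

/-- A family of disjoint perfect matchings of `A` whose edges are together covered by triples of the
holed system all of whose pairs are such edges. -/
structure HoledSystem.IsMatchingFamily {X A C : Type*} (E : HoledSystem X A) (N : C → A → A) :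
    Prop where
  ne : ∀ c a, N c a ≠ a
  involutive : ∀ c, Function.Involutive (N c)
  injective : ∀ a, Function.Injective fun c => N c a
  exists_op_eq : ∀ c a, ∃ d, E.op a (Sum.inr (N c a)) = Sum.inr (N d a)

namespace HoledSystem.IsMatchingFamily

variable {X A C : Type*} {E : HoledSystem X A} {N : C → A → A}

theorem partialInv_eq_some (hN : E.IsMatchingFamily N) {a b : A} {c : C} :
    Function.partialInv (fun c => N c a) b = some c ↔ N c a = b :=
  (hN.injective a).isPartialInv c b

theorem partialInv_eq_none (hN : E.IsMatchingFamily N) {a b : A} :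
    Function.partialInv (fun c => N c a) b = none ↔ ∀ c, N c a ≠ b := by
  simp only [Option.eq_none_iff_forall_ne_some, ne_eq, hN.partialInv_eq_some]

theorem apply_ne_of_op_eq (hN : E.IsMatchingFamily N) {a b : A} {z : X ⊕ A}
    (hz : E.op a z = Sum.inr b) (hne : ∀ c, z ≠ Sum.inr (N c a)) (c : C) : N c a ≠ b := by
  rintro rfl
  obtain ⟨d, hd⟩ := hN.exists_op_eq c a
  rw [← hz, E.cancel] at hd
  exact hne d hd

/-- Adding the matchings of a matching family to the hole: a triple covered by them is replaced by
the triples consisting of one of its pairs and the new point whose matching contains that pair. -/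
def adjoin (hN : E.IsMatchingFamily N) : HoledSystem (X ⊕ C) A where
  op a
    | Sum.inl (Sum.inl x) => Sum.inr (E.partner x a)
    | Sum.inl (Sum.inr c) => Sum.inr (N c a)
    | Sum.inr b =>
      (Function.partialInv (fun c => N c a) b).elim ((E.op a (Sum.inr b)).map Sum.inl id)
        fun c => Sum.inl (Sum.inr c)
  idem a := by
    simp only [hN.partialInv_eq_none.2 fun c => hN.ne c a, Option.elim_none, E.idem, Sum.map_inr,
      id_eq]
  comm a b := by
    have hinv :
        Function.partialInv (fun c => N c a) b = Function.partialInv (fun c => N c b) a := by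
      ext c
      rw [hN.partialInv_eq_some, hN.partialInv_eq_some, (hN.involutive c).eq_iff, eq_comm]
    simp only [hinv, E.comm a b]
  cancel a
    | Sum.inl (Sum.inl x) => by
      have hne := hN.apply_ne_of_op_eq (E.op_inl a x) fun _ => Sum.inl_ne_inr
      simp only [hN.partialInv_eq_none.2 hne, Option.elim_none, E.op_inr_eq_inl_iff.2 rfl,
        Sum.map_inl]
    | Sum.inl (Sum.inr c) => by
      simp only [hN.partialInv_eq_some.2 rfl, Option.elim_some]
    | Sum.inr b => by
      rcases hb : Function.partialInv (fun c => N c a) b with _ | c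
      · rcases hz : E.op a (Sum.inr b) with x | d
        · simp only [hb, Option.elim_none, hz, Sum.map_inl, E.op_inr_eq_inl_iff.1 hz]
        · have hne := hN.apply_ne_of_op_eq hz fun c h =>
            hN.partialInv_eq_none.1 hb c (Sum.inr_injective h).symm
          simp only [hb, Option.elim_none, hz, Sum.map_inr, id_eq, hN.partialInv_eq_none.2 hne]
          rw [← hz, E.cancel, Sum.map_inr, id_eq]
      · simp only [hb, Option.elim_some, hN.partialInv_eq_some.1 hb]
  isRight_op_inl _
    | Sum.inl _ => rfl
    | Sum.inr _ => rfl

end HoledSystem.IsMatchingFamily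

/-- The additive group of the field with four elements. -/
abbrev KleinFour := ZMod 2 × ZMod 2

namespace KleinFour

/-- Multiplication by a primitive cube root of unity `ω` of the field with four elements. -/
def rotate (g : KleinFour) : KleinFour := (g.2, g.1 + g.2)

/-- The combination `ω² g + ω h` or `ω g + ω² h`, according to the sign `b`. -/
def mix (b : Bool) (g h : KleinFour) : KleinFour :=
  cond b (rotate (rotate g) + rotate h) (rotate g + rotate (rotate h))

/-- The elements `ω` and `ω²`. -/
def root (e : Bool) : KleinFour := cond e (0, 1) (1, 1)

/-- A linear form on the field with four elements not vanishing at `1`. -/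
def form (g : KleinFour) : Bool := g.1 = 1

theorem mix_not (b : Bool) (g h : KleinFour) : mix (!b) g h = mix b h g := by
  revert b g h
  decide

theorem mix_mix_left (b : Bool) (g h : KleinFour) : mix b (mix b g h) g = h := by
  revert b g h
  decide

theorem mix_mix_right (b : Bool) (g h : KleinFour) : mix b g (mix b h g) = h := by
  revert b g h
  decide

theorem mix_add_root_left (e : Bool) (g : KleinFour) : mix e (g + root e) g = g + (1, 0) := by
  revert e g
  decide

theorem mix_add_root_right (e : Bool) (g : KleinFour) :
    mix e g (g + root e) = g + root (!e) := by
  revert e g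
  decide

theorem mix_add_one (e : Bool) (g : KleinFour) : mix e g (g + (1, 0)) = g + root e := by
  revert e g
  decide

theorem add_add_self (g h : KleinFour) : g + h + h = g := by
  revert g h
  decide

theorem form_add_one (g : KleinFour) : form (g + (1, 0)) = !form g := by
  revert g
  decide

end KleinFour

theorem level_cases (i j : ZMod 3) : j = i ∨ j = i + 1 ∨ i = j + 1 := by
  revert i j
  decide

theorem level_add_one_ne (i : ZMod 3) : i + 1 ≠ i := by
  revert i
  decide

theorem level_ne_add_one_add_one (i : ZMod 3) : i ≠ i + 1 + 1 := by
  revert i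
  decide

/-- A choice of one element, called positive, from each pair of opposite nonzero elements. -/
structure SignChoice (R : Type*) [CommRing R] where
  pos : R → Bool
  pos_neg : ∀ d, d ≠ 0 → pos (-d) = !pos d

namespace SignChoice

variable {R : Type*} [CommRing R]

section Design

variable [Invertible (2 : R)] (P : SignChoice R)

/-- Bose's construction with points in `R × ZMod 3`, lifted to `R × ZMod 3 × KleinFour`: the triples
consist of points over `a`, `b` at a level `i` and a point over their mean at the level `i + 1`. The
sign of `b - a` orders the two points at level `i`, so that `mix` can be used to compute the last
coordinate. -/
def third (p q : R × ZMod 3 × KleinFour) : R × ZMod 3 × KleinFour :=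
  if p.2.1 = q.2.1 then
    (⅟2 * (p.1 + q.1), p.2.1 + 1, KleinFour.mix (P.pos (⅟2 * (q.1 - p.1))) p.2.2 q.2.2)
  else if q.2.1 = p.2.1 + 1 then
    (2 * q.1 - p.1, p.2.1, KleinFour.mix (P.pos (q.1 - p.1)) q.2.2 p.2.2)
  else (2 * p.1 - q.1, q.2.1, KleinFour.mix (P.pos (p.1 - q.1)) p.2.2 q.2.2)

theorem third_same (a b : R) (i : ZMod 3) (g h : KleinFour) :
    P.third (a, i, g) (b, i, h) =
      (⅟2 * (a + b), i + 1, KleinFour.mix (P.pos (⅟2 * (b - a))) g h) :=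
  if_pos rfl

theorem third_up (a b : R) (i : ZMod 3) (g h : KleinFour) :
    P.third (a, i, g) (b, i + 1, h) = (2 * b - a, i, KleinFour.mix (P.pos (b - a)) h g) := by
  simp [third]

theorem third_down (a b : R) (i : ZMod 3) (g h : KleinFour) :
    P.third (a, i + 1, g) (b, i, h) = (2 * a - b, i, KleinFour.mix (P.pos (a - b)) g h) := by
  simp only [third, if_neg (level_add_one_ne i), if_neg (level_ne_add_one_add_one i)]

/-- A group divisible design of triples with groups of size `12`. -/
def design : GroupDivisible R (ZMod 3 × KleinFour) where
  op := P.third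
  comm := by
    rintro ⟨a, i, g⟩ ⟨b, j, h⟩ hab
    rcases level_cases i j with rfl | rfl | rfl
    · have hne : ⅟2 * (b - a) ≠ 0 := fun h => hab (by
        linear_combination -2 * h + (b - a) * mul_invOf_self (2 : R))
      rw [third_same, third_same, add_comm a b, ← neg_sub b a, mul_neg, P.pos_neg _ hne,
        KleinFour.mix_not]
    · rw [third_up, third_down]
    · rw [third_up, third_down]
  fst_ne := by
    rintro ⟨a, i, g⟩ ⟨b, j, h⟩ hab
    rcases level_cases i j with rfl | rfl | rfl
    · rw [third_same]
      exact fun h => hab (by linear_combination -2 * h + (a + b) * mul_invOf_self (2 : R))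
    · rw [third_up]
      exact fun h => hab ((isUnit_of_invertible (2 : R)).mul_left_cancel
        (by linear_combination -h))
    · rw [third_down]
      exact fun h => hab (by linear_combination h)
  cancel := by
    rintro ⟨a, i, g⟩ ⟨b, j, h⟩ hab
    rcases level_cases i j with rfl | rfl | rfl
    · have hb : 2 * (⅟2 * (a + b)) - a = b := by rw [mul_invOf_cancel_left, add_sub_cancel_left]
      have hd : ⅟2 * (a + b) - a = ⅟2 * (b - a) := by
        linear_combination a * mul_invOf_self (2 : R)
      rw [third_same, third_up, hb, hd, KleinFour.mix_mix_left]
    · have hb : ⅟2 * (a + (2 * b - a)) = b := by rw [add_sub_cancel, invOf_mul_cancel_left]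
      have hd : ⅟2 * (2 * b - a - a) = b - a := by
        linear_combination (b - a) * mul_invOf_self (2 : R)
      rw [third_up, third_same, hb, hd, KleinFour.mix_mix_right]
    · have hd : a - (2 * a - b) = -(a - b) := by ring
      rw [third_down, third_down, sub_sub_cancel, hd, P.pos_neg _ (sub_ne_zero.2 hab),
        KleinFour.mix_not, KleinFour.mix_mix_left]

end Design

section Shift

/-- The unit `1` or `-1`. -/
def sgn (R : Type*) [CommRing R] (e : Bool) : R := cond e 1 (-1)

theorem sgn_not (e : Bool) : sgn R (!e) = -sgn R e := by
  cases e <;> simp [sgn]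

theorem sgn_mul_sgn (e : Bool) : sgn R e * sgn R e = 1 := by
  cases e <;> simp [sgn]

theorem sgn_mul_ne_zero {d : R} (hd : d ≠ 0) (e : Bool) : sgn R e * d ≠ 0 := fun h => hd (by
  linear_combination sgn R e * h - d * sgn_mul_sgn (R := R) e)

/-- The involution of the point set attached to a difference `d`, a level `j` and a sign `e`. It
exchanges the levels `j` and `j + 1`, moving by `± d`, and moves within the level `j + 2` by
`± 2 * d`. For a positive `d`, the orbits of the six involutions with difference `d` form a graph of
degree six that is also a union of triples of the design. -/
def shift (d : R) (j : ZMod 3) (e : Bool) (p : R × ZMod 3 × KleinFour) :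
    R × ZMod 3 × KleinFour :=
  if p.2.1 = j then (p.1 + sgn R e * d, j + 1, p.2.2 + KleinFour.root e)
  else if p.2.1 = j + 1 then (p.1 - sgn R e * d, j, p.2.2 + KleinFour.root e)
  else (p.1 + 2 * (sgn R (KleinFour.form p.2.2 == e) * d), p.2.1, p.2.2 + (1, 0))

theorem shift_same (d a : R) (j : ZMod 3) (e : Bool) (g : KleinFour) :
    shift d j e (a, j, g) = (a + sgn R e * d, j + 1, g + KleinFour.root e) :=
  if_pos rfl

theorem shift_up (d a : R) (j : ZMod 3) (e : Bool) (g : KleinFour) :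
    shift d j e (a, j + 1, g) = (a - sgn R e * d, j, g + KleinFour.root e) := by
  simp [shift]

theorem shift_down (d a : R) (i : ZMod 3) (e : Bool) (g : KleinFour) :
    shift d (i + 1) e (a, i, g) =
      (a + 2 * (sgn R (KleinFour.form g == e) * d), i, g + (1, 0)) := by
  simp only [shift, if_neg (level_add_one_ne i).symm, if_neg (level_ne_add_one_add_one i)]

theorem shift_level (d : R) (j : ZMod 3) (e : Bool) (p : R × ZMod 3 × KleinFour) :
    (shift d j e p).2.1 = 2 * j + 1 - p.2.1 := by
  obtain ⟨a, i, g⟩ := p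
  rcases level_cases i j with rfl | rfl | rfl
  · rw [shift_same]
    ring
  · rw [shift_down]
    change i = 2 * (i + 1) + 1 - i
    revert i
    decide
  · rw [shift_up]
    ring

theorem shift_shift (d : R) (j : ZMod 3) (e : Bool) (p : R × ZMod 3 × KleinFour) :
    shift d j e (shift d j e p) = p := by
  obtain ⟨a, i, g⟩ := p
  rcases level_cases i j with rfl | rfl | rfl
  · rw [shift_same, shift_up, KleinFour.add_add_self, add_sub_cancel_right]
  · have hnot : ((!KleinFour.form g) == e) = !(KleinFour.form g == e) := by
      cases KleinFour.form g <;> cases e <;> rfl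
    rw [shift_down, shift_down, KleinFour.form_add_one, KleinFour.add_add_self, hnot, sgn_not,
      neg_mul, mul_neg, add_neg_cancel_right]
  · rw [shift_up, shift_same, KleinFour.add_add_self, sub_add_cancel]

theorem shift_fst_ne [Invertible (2 : R)] {d : R} (hd : d ≠ 0) (j : ZMod 3) (e : Bool)
    (p : R × ZMod 3 × KleinFour) : (shift d j e p).1 ≠ p.1 := by
  obtain ⟨a, i, g⟩ := p
  rcases level_cases i j with rfl | rfl | rfl
  · simp [shift_same, sgn_mul_ne_zero hd]
  · simp [shift_down, sgn_mul_ne_zero hd, (isUnit_of_invertible (2 : R)).mul_right_eq_zero]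
  · simp [shift_up, sgn_mul_ne_zero hd]

variable (P : SignChoice R)

theorem pos_sgn_mul {d : R} (hd₀ : d ≠ 0) (hd : P.pos d) (e : Bool) :
    P.pos (sgn R e * d) = e := by
  cases e <;> simp [sgn, hd, P.pos_neg d hd₀]

theorem sgn_mul_inj {c d : R} (hc₀ : c ≠ 0) (hc : P.pos c) (hd₀ : d ≠ 0) (hd : P.pos d)
    {e f : Bool} : sgn R e * c = sgn R f * d ↔ e = f ∧ c = d := by
  refine ⟨fun h => ?_, fun ⟨hef, hcd⟩ => by rw [hef, hcd]⟩
  obtain rfl : e = f := by rw [← P.pos_sgn_mul hc₀ hc e, h, P.pos_sgn_mul hd₀ hd]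
  exact ⟨rfl, by linear_combination sgn R e * h - (c - d) * sgn_mul_sgn (R := R) e⟩

variable [Invertible (2 : R)]

theorem third_shift {d : R} (hd₀ : d ≠ 0) (hd : P.pos d) (j : ZMod 3) (e : Bool)
    (p : R × ZMod 3 × KleinFour) : ∃ k f, P.third p (shift d j e p) = shift d k f p := by
  obtain ⟨a, i, g⟩ := p
  rcases level_cases i j with rfl | rfl | rfl
  · refine ⟨j + 1, KleinFour.form g == e, ?_⟩
    have hform : (KleinFour.form g == (KleinFour.form g == e)) = e := by
      cases KleinFour.form g <;> cases e <;> rfl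
    rw [shift_same, third_up, shift_down, add_sub_cancel_left, P.pos_sgn_mul hd₀ hd,
      KleinFour.mix_add_root_left, hform]
    congr 1
    ring
  · refine ⟨i, KleinFour.form g == e, ?_⟩
    have hmean (t : R) : ⅟2 * (a + (a + 2 * t)) = a + t := by
      rw [← add_assoc, ← two_mul, ← mul_add, invOf_mul_cancel_left]
    rw [shift_down, third_same, shift_same, add_sub_cancel_left, hmean, invOf_mul_cancel_left,
      P.pos_sgn_mul hd₀ hd, KleinFour.mix_add_one]
  · refine ⟨j, !e, ?_⟩
    rw [shift_up, third_down, shift_up, sub_sub_cancel, P.pos_sgn_mul hd₀ hd,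
      KleinFour.mix_add_root_right, sgn_not]
    congr 1
    ring

theorem shift_inj {c d : R} (hc₀ : c ≠ 0) (hc : P.pos c) (hd₀ : d ≠ 0) (hd : P.pos d)
    {j k : ZMod 3} {e f : Bool} {p : R × ZMod 3 × KleinFour}
    (h : shift c j e p = shift d k f p) : c = d ∧ j = k ∧ e = f := by
  have hlevel : 2 * j + 1 - p.2.1 = 2 * k + 1 - p.2.1 := by
    rw [← shift_level c j e, h, shift_level]
  obtain rfl : j = k := by
    have htwo : ∀ j k : ZMod 3, 2 * j = 2 * k → j = k := by decide
    exact htwo j k (by linear_combination hlevel)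
  obtain ⟨a, i, g⟩ := p
  have hinj {e f : Bool} : sgn R e * c = sgn R f * d ↔ e = f ∧ c = d :=
    P.sgn_mul_inj hc₀ hc hd₀ hd
  have hfst := congrArg Prod.fst h
  rcases level_cases i j with rfl | rfl | rfl
  · simp only [shift_same, add_right_inj, hinj] at hfst
    exact ⟨hfst.2, rfl, hfst.1⟩
  · simp only [shift_down, add_right_inj, (isUnit_of_invertible (2 : R)).mul_right_inj,
      hinj] at hfst
    refine ⟨hfst.2, rfl, ?_⟩
    have hform := hfst.1
    revert hform
    cases KleinFour.form g <;> cases e <;> cases f <;> simp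
  · simp only [shift_up, sub_right_inj, hinj] at hfst
    exact ⟨hfst.2, rfl, hfst.1⟩

theorem isMatchingFamily_shift {X I : Type*} (E : HoledSystem X (ZMod 3 × KleinFour)) {δ : I → R}
    (hδ : Function.Injective δ) (hδ₀ : ∀ i, δ i ≠ 0) (hpos : ∀ i, P.pos (δ i)) :
    (P.design.fill E).IsMatchingFamily
      fun c : I × ZMod 3 × Bool => shift (δ c.1) c.2.1 c.2.2 where
  ne c p h := shift_fst_ne (hδ₀ c.1) _ _ p (congrArg Prod.fst h)
  involutive _ _ := shift_shift _ _ _ _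
  injective p := by
    rintro ⟨i, j, e⟩ ⟨i', k, f⟩ h
    obtain ⟨hd, rfl, rfl⟩ := P.shift_inj (hδ₀ i) (hpos i) (hδ₀ i') (hpos i') h
    rw [hδ hd]
  exists_op_eq := by
    rintro ⟨i, j, e⟩ p
    obtain ⟨k, f, h⟩ := P.third_shift (hδ₀ i) (hpos i) j e p
    exact ⟨(i, k, f), by
      rw [← h]
      exact if_neg (shift_fst_ne (hδ₀ i) j e p).symm⟩

end Shift

end SignChoice

/-! ### Existence of Steiner quasigroups -/

namespace SteinerQuasigroup

/-- The translation invariant Steiner quasigroup on an abelian group whose triples through `0`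
are `{0, d, f d}`. -/
def ofDifference {G : Type*} [AddCommGroup G] (f : G → G) (f_zero : f 0 = 0)
    (f_neg : ∀ d, f (-d) = f d - d) (f_f : ∀ d, f (f d) = d) : SteinerQuasigroup G where
  op a b := a + f (b - a)
  idem a := by rw [sub_self, f_zero, add_zero]
  comm a b := by
    rw [← neg_sub a b, f_neg]
    abel
  cancel a b := by rw [add_sub_cancel_left, f_f, add_sub_cancel]

theorem nonempty_fin_one : Nonempty (SteinerQuasigroup (Fin 1)) :=
  ⟨ofDifference id rfl (by decide) (by decide)⟩

theorem nonempty_fin_three : Nonempty (SteinerQuasigroup (Fin 3)) :=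
  ⟨ofDifference (fun d => -d) rfl (by decide) (by decide)⟩

-- The translates of `{0, 1, 3}` modulo `7`.
theorem nonempty_fin_seven : Nonempty (SteinerQuasigroup (Fin 7)) :=
  ⟨ofDifference ![0, 3, 6, 1, 5, 4, 2] rfl (by decide) (by decide)⟩

theorem nonempty_fin_nine : Nonempty (SteinerQuasigroup (Fin 9)) :=
  ⟨(ofDifference (G := ZMod 3 × ZMod 3) (fun d => -d) rfl (by decide) (by decide)).map
    (Fintype.equivFinOfCardEq (by decide))⟩

end SteinerQuasigroup

namespace HoledSystem

-- The translates of `{0, 1, 4}` and `{0, 2, 7}` modulo `13`, punctured at a point.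
theorem nonempty_one_twelve : Nonempty (HoledSystem (Fin 1) (ZMod 3 × KleinFour)) := by
  let S := SteinerQuasigroup.ofDifference (G := Fin 13)
    ![0, 4, 7, 12, 1, 11, 8, 2, 6, 10, 9, 5, 3] rfl (by decide) (by decide)
  refine (S.punch (· = 0) ?_).nonempty_of_card ?_ ?_
  · rintro _ _ rfl rfl
    exact S.idem 0
  · simp only [Fintype.card_unique]
  · rw [Fintype.card_subtype_compl]
    simp [ZMod.card]

-- The translates of `{0, 1, 4}`, `{0, 2, 8}` and `{0, 5, 10}` modulo `15`, without the last triple.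
theorem nonempty_three_twelve : Nonempty (HoledSystem (Fin 3) (ZMod 3 × KleinFour)) := by
  let S := SteinerQuasigroup.ofDifference (G := Fin 15)
    ![0, 4, 8, 14, 1, 10, 13, 9, 2, 7, 5, 12, 11, 6, 3] rfl (by decide) (by decide)
  have hS : ∀ a b, a ∈ ({0, 5, 10} : Finset (Fin 15)) → b ∈ ({0, 5, 10} : Finset (Fin 15)) →
      S.op a b ∈ ({0, 5, 10} : Finset (Fin 15)) := by
    decide
  refine (S.punch (· ∈ ({0, 5, 10} : Finset (Fin 15))) hS).nonempty_of_card ?_ ?_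
  · rw [Fintype.card_coe]
    rfl
  · rw [Fintype.card_subtype_compl, Fintype.card_coe]
    simp [ZMod.card]

end HoledSystem

/-- The residues `1, …, m` modulo `2 * m + 1` as the positive ones. -/
def SignChoice.zmod (m : ℕ) : SignChoice (ZMod (2 * m + 1)) where
  pos d := d.val ≤ m
  pos_neg d hd := by
    have : NeZero d := ⟨hd⟩
    have hlt := d.val_lt
    rw [ZMod.val_neg_of_ne_zero, ← decide_not, decide_eq_decide]
    omega

theorem HoledSystem.nonempty_fin {h m q : ℕ} (hh : h = 1 ∨ h = 3) (hq : q ≤ m) :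
    Nonempty (HoledSystem (Fin (h + 6 * q)) (Fin (12 * (2 * m + 1)))) := by
  obtain ⟨E⟩ : Nonempty (HoledSystem (Fin h) (ZMod 3 × KleinFour)) := by
    rcases hh with rfl | rfl
    · exact nonempty_one_twelve
    · exact nonempty_three_twelve
  have : Invertible (2 : ZMod (2 * m + 1)) := invertibleOfCoprime (n := 2) (by simp)
  have hval (i : Fin q) : ((i + 1 : ℕ) : ZMod (2 * m + 1)).val = i + 1 :=
    ZMod.val_natCast_of_lt (by omega)
  have hN := (SignChoice.zmod m).isMatchingFamily_shift E
    (δ := fun i : Fin q => ((i + 1 : ℕ) : ZMod (2 * m + 1)))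
    (fun i j hij => Fin.ext (by simpa only [hval, add_left_inj] using congrArg ZMod.val hij))
    (fun i => by rw [← ZMod.val_ne_zero, hval]; omega)
    (fun i => decide_eq_true (by rw [hval]; omega))
  refine hN.adjoin.nonempty_of_card ?_ ?_ <;>
    simp only [Fintype.card_sum, Fintype.card_prod, Fintype.card_fin, ZMod.card, Fintype.card_bool]
      <;> omega

namespace SteinerQuasigroup

theorem nonempty_fin_add {h m q : ℕ} (hh : h = 1 ∨ h = 3) (hq : q ≤ m)
    (hS : Nonempty (SteinerQuasigroup (Fin (h + 6 * q)))) :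
    Nonempty (SteinerQuasigroup (Fin (h + 6 * q + 12 * (2 * m + 1)))) := by
  obtain ⟨S⟩ := hS
  obtain ⟨E⟩ := HoledSystem.nonempty_fin hh hq
  exact ⟨(E.fillHole S).map finSumFinEquiv⟩

theorem nonempty_fin_of_mod {x : ℕ} (hx : 37 ≤ x)
    (h : x % 24 = 13 ∨ x % 24 = 15 ∨ x % 24 = 19 ∨ x % 24 = 21) :
    Nonempty (SteinerQuasigroup (Fin x)) := by
  obtain ⟨h, m, q, hh, hq, hm, rfl⟩ :
      ∃ h m q, (h = 1 ∨ h = 3) ∧ (q = 0 ∨ q = 1) ∧ 1 ≤ m ∧ x = h + 6 * q + 12 * (2 * m + 1) :=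
    ⟨x % 6, x / 24, x % 24 / 6 - 2, by omega⟩
  refine nonempty_fin_add hh (by omega) ?_
  rcases hh with rfl | rfl <;> rcases hq with rfl | rfl
  · exact nonempty_fin_one
  · exact nonempty_fin_seven
  · exact nonempty_fin_three
  · exact nonempty_fin_nine

theorem nonempty_fin {x : ℕ} (hx : 225 ≤ x) (h : x % 6 = 1 ∨ x % 6 = 3) :
    Nonempty (SteinerQuasigroup (Fin x)) := by
  by_cases hmod : x % 24 = 13 ∨ x % 24 = 15 ∨ x % 24 = 19 ∨ x % 24 = 21
  · exact nonempty_fin_of_mod (by omega) hmod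
  · obtain ⟨h, m, q, hh, hq, hm, rfl⟩ :
        ∃ h m q, (h = 1 ∨ h = 3) ∧ (q = 6 ∨ q = 7) ∧ 7 ≤ m ∧ x = h + 6 * q + 12 * (2 * m + 1) :=
      ⟨x % 6, x / 24 - 2, x % 24 / 6 + 6, by omega⟩
    exact nonempty_fin_add hh (by omega) (nonempty_fin_of_mod (by omega) (by omega))

end SteinerQuasigroup

/-! ### A rigid Steiner quasigroup -/

namespace SteinerQuasigroup

/-- An isomorphism invariant of the point `p`: the number of pairs `(a, b)` that span with `p` a
Pasch configuration or a degenerate form of it. -/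
def paschCount {α : Type*} [Fintype α] [DecidableEq α] (op : α → α → α) (p : α) : ℕ :=
  #{x : α × α | op (op p x.1) (op p x.2) = op x.1 x.2}

theorem IsAutomorphism.paschCount_apply {α : Type*} [Fintype α] [DecidableEq α]
    {S : SteinerQuasigroup α} {g : Equiv.Perm α} (hg : S.IsAutomorphism g) (p : α) :
    paschCount S.op (g p) = paschCount S.op p := by
  refine (card_equiv (g.prodCongr g) fun x => ?_).symm
  simp only [mem_filter_univ, Equiv.prodCongr_apply, Prod.map_fst, Prod.map_snd]
  rw [← hg, ← hg, ← hg, ← hg, g.injective.eq_iff]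

/-- The multiplication table of a Steiner quasigroup without nontrivial automorphisms. -/
def rigidTable : List (List (Fin 15)) :=
  [[0, 4, 5, 6, 1, 2, 3, 11, 14, 12, 13, 7, 9, 10, 8],
   [4, 1, 6, 7, 0, 11, 2, 3, 10, 13, 8, 5, 14, 9, 12],
   [5, 6, 2, 8, 9, 0, 1, 14, 3, 4, 12, 13, 10, 11, 7],
   [6, 7, 8, 3, 10, 12, 0, 1, 2, 11, 4, 9, 5, 14, 13],
   [1, 0, 9, 10, 4, 13, 8, 12, 6, 2, 3, 14, 7, 5, 11],
   [2, 11, 0, 12, 13, 5, 14, 10, 9, 8, 7, 1, 3, 4, 6],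
   [3, 2, 1, 0, 8, 14, 6, 9, 4, 7, 11, 10, 13, 12, 5],
   [11, 3, 14, 1, 12, 10, 9, 7, 13, 6, 5, 0, 4, 8, 2],
   [14, 10, 3, 2, 6, 9, 4, 13, 8, 5, 1, 12, 11, 7, 0],
   [12, 13, 4, 11, 2, 8, 7, 6, 5, 9, 14, 3, 0, 1, 10],
   [13, 8, 12, 4, 3, 7, 11, 5, 1, 14, 10, 6, 2, 0, 9],
   [7, 5, 13, 9, 14, 1, 10, 0, 12, 3, 6, 11, 8, 2, 4],
   [9, 14, 10, 5, 7, 3, 13, 4, 11, 0, 2, 8, 12, 6, 1],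
   [10, 9, 11, 14, 5, 4, 12, 8, 7, 1, 0, 2, 6, 13, 3],
   [8, 12, 7, 13, 11, 6, 5, 2, 0, 10, 9, 4, 1, 3, 14]]

/-- The operation with multiplication table `rigidTable`. -/
def rigidOp (a b : Fin 15) : Fin 15 :=
  (rigidTable.getD a []).getD b 0

/-- A Steiner quasigroup without nontrivial automorphisms. -/
def rigid : SteinerQuasigroup (Fin 15) where
  op := rigidOp
  idem := by decide +kernel
  comm := by decide +kernel
  cancel := by decide +kernel

/-- The values of `paschCount rigidOp`. -/
def rigidCount (p : Fin 15) : ℕ :=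
  [19, 15, 23, 39, 27, 31, 35, 35, 27, 31, 31, 31, 35, 31, 31].getD p 0

theorem paschCount_rigidOp (p : Fin 15) : paschCount rigidOp p = rigidCount p := by
  revert p
  decide +kernel

theorem eq_of_rigidCount_eq {p q : Fin 15} (hp : p < 4) (h : rigidCount q = rigidCount p) :
    q = p := by
  revert p q
  decide

theorem exists_rigidOp_eq_of_four_le {p : Fin 15} (hp : 4 ≤ p) :
    ∃ a < p, ∃ b < p, rigidOp a b = p := by
  revert p
  decide +kernel

theorem eq_one_of_isAutomorphism_rigid {g : Equiv.Perm (Fin 15)} (hg : rigid.IsAutomorphism g) :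
    g = 1 := by
  have hop (a b : Fin 15) : g (rigidOp a b) = rigidOp (g a) (g b) := hg a b
  ext p : 1
  induction p using WellFoundedLT.induction with
  | ind p ih =>
    rcases lt_or_ge p 4 with hp | hp
    · refine eq_of_rigidCount_eq hp ?_
      rw [← paschCount_rigidOp, ← paschCount_rigidOp]
      exact hg.paschCount_apply p
    · obtain ⟨a, ha, b, hb, rfl⟩ := exists_rigidOp_eq_of_four_le hp
      rw [hop, ih a ha, ih b hb]
      rfl

end SteinerQuasigroup

/-! ### The full embedding -/

theorem exists_eq_add_mul_of_large {v : ℕ} (hv : 0 < v) (b c : ℕ) :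
    ∃ N, ∀ u, N ≤ u → ∃ x k, u = x + v * (12 * (2 * k + 1)) ∧ b ≤ x ∧ c * x ≤ k := by
  refine ⟨12 * v + b + 24 * v * (c * (b + 24 * v)), fun u hu => ?_⟩
  obtain ⟨w, rfl⟩ := Nat.exists_eq_add_of_le ((Nat.le_add_right _ _).trans hu)
  refine ⟨b + w % (24 * v), w / (24 * v), ?_, Nat.le_add_right _ _, ?_⟩
  · linarith [Nat.div_add_mod w (24 * v)]
  · have hmod : w % (24 * v) < 24 * v := Nat.mod_lt _ (by omega)
    calc c * (b + w % (24 * v)) ≤ c * (b + 24 * v) := Nat.mul_le_mul_left _ (by omega)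
      _ ≤ w / (24 * v) := by
        rw [Nat.le_div_iff_mul_le (by omega), mul_comm]
        exact Nat.add_le_add_iff_left.1 hu

theorem HoledSystem.IsRigidLabelling.isFullEmbedding_moore {V X : Type*} [Fintype V] [Nontrivial V]
    [Fintype X] {n : ℕ} [NeZero n] {hn : 2 ∣ n} (hn₁₂ : 12 < n) {E : HoledSystem X (ZMod n)}
    {x₀ : X} (hE : E.IsRigidLabelling hn x₀) (hX : Fintype.card V * Fintype.card X < n)
    (hV : Fintype.card V * 4 < n) (S : SteinerQuasigroup V) (SX : SteinerQuasigroup X) :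
    S.IsFullEmbedding (S.moore E SX) fun v => Sum.inr (v, 0) := by
  have hS : S.FibresRecognizable E SX :=
    SteinerQuasigroup.fibresRecognizable_of_card_mul_lt (x₀ := x₀) (B := {0, 3, 4, 9})
      (fun a ha => by rw [hE.partner_eq, zmultiples_twistedMatching_sub_self ha])
      (by rwa [ZMod.card])
      (by rw [ZMod.card]; exact (Nat.mul_le_mul_left _ card_le_four).trans_lt hV)
  exact hS.isFullEmbedding_moore (hE.isAffineRigid hn₁₂)

theorem SteinerQuasigroup.exists_isFullEmbedding {α : Type*} [Finite α] [Nontrivial α]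
    (S : SteinerQuasigroup α) :
    ∃ N : ℕ, ∀ u : ℕ, N ≤ u → u % 6 = 1 ∨ u % 6 = 3 →
      ∃ (U : SteinerQuasigroup (Fin u)) (φ : α → Fin u), S.IsFullEmbedding U φ := by
  have := Fintype.ofFinite α
  obtain ⟨N, hN⟩ :=
    exists_eq_add_mul_of_large (Fintype.card_pos (α := α)) 225 (Fintype.card α + 8)
  refine ⟨N, fun u hu hmod => ?_⟩
  obtain ⟨x, k, hsize, hx, hxk⟩ := hN u hu
  have hxmod : u % 6 = x % 6 := by
    rw [hsize, mul_left_comm]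
    omega
  rw [add_mul] at hxk
  have hhole : x % 6 + 6 * (x / 6) = x := Nat.mod_add_div x 6
  obtain ⟨SX⟩ := nonempty_fin hx (hxmod ▸ hmod)
  obtain ⟨E⟩ := HoledSystem.nonempty_fin (hxmod ▸ hmod) (show x / 6 ≤ k by omega)
  rw [hhole] at E
  have : NeZero (12 * (2 * k + 1)) := ⟨by omega⟩
  obtain ⟨e, he⟩ := E.exists_isRigidLabelling ⟨0, by omega⟩ (n := 12 * (2 * k + 1))
    (by omega) (by omega) (Fintype.card_fin _) (by rw [Fintype.card_fin]; omega)
  have hfull := he.isFullEmbedding_moore (by omega) (by rw [Fintype.card_fin]; omega)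
    (by nlinarith) S SX
  refine ⟨_, _, hfull.map (Fintype.equivFinOfCardEq ?_)⟩
  rw [Fintype.card_sum, Fintype.card_prod, Fintype.card_fin, ZMod.card, hsize]

/-- **Theorem 1.2.** If `V_*` is a Steiner triple system then there is an integer
`N` such that, for `u ≥ N` and `u ≡ 1` or `3 (mod 6)`, there is a Steiner triple
system `U` on `u` points having `V_*` as an `Aut U`-invariant subsystem on which
`Aut U` induces `Aut V_*`, with `Aut U ≅ Aut V_*` via restriction. -/
theorem stmt1 {α : Type*} [Fintype α] (TV : Finset (Finset α)) (hV : IsSTS TV) :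
    ∃ N : ℕ, ∀ u : ℕ, N ≤ u → u % 6 = 1 ∨ u % 6 = 3 →
      ∃ T : Finset (Finset (Fin u)), IsSTS T ∧
        ∃ φ : α → Fin u, FullEmbedding TV T φ := by
  obtain ⟨S, rfl⟩ := SteinerQuasigroup.exists_triples_eq hV
  suffices h : ∃ N : ℕ, ∀ u : ℕ, N ≤ u → u % 6 = 1 ∨ u % 6 = 3 →
      ∃ (U : SteinerQuasigroup (Fin u)) (φ : α → Fin u), S.IsFullEmbedding U φ by
    obtain ⟨N, hN⟩ := h
    refine ⟨N, fun u hu hmod => ?_⟩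
    obtain ⟨U, φ, hφ⟩ := hN u hu hmod
    exact ⟨U.triples, U.isSTS_triples, φ, hφ.fullEmbedding⟩
  rcases subsingleton_or_nontrivial α with hα | hα
  · obtain ⟨N, hN⟩ := SteinerQuasigroup.rigid.exists_isFullEmbedding
    refine ⟨N, fun u hu hmod => ?_⟩
    obtain ⟨U, φ, hφ⟩ := hN u hu hmod
    exact ⟨U, fun _ => φ 0, S.isFullEmbedding_of_subsingleton
      (fun _ => hφ.eq_one fun _ => SteinerQuasigroup.eq_one_of_isAutomorphism_rigid) _⟩
  · exact S.exists_isFullEmbedding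

end
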